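/- arXiv:1103.0937 — 6 statements merged into one kernel-verified Lean document; each statement's English description precedes it below -/
import Mathlib

section
/- For every real θ > 0 and every smooth function f : (0,∞) → ℂ, the conjugated operator satisfies, for all u > 0, U_θ( −(d²/du²)(U_θ^{-1} f) )(u) = a_2(θ,u) f''(u) + a_1(θ,u) f'(u) + a_0(θ,u) f(u); that is, U_θ ∘ (−d²/du²) ∘ U_θ^{-1} = a_2(θ,·) ∂²_u + a_1(θ,·) ∂_u + a_0(θ,·) on smooth functions. -/
open Set MeasureTheory

/-! Put `w = (ψ')^(-1/2)`. The chain rule turns `U ∂ U⁻¹` into the symmetric first-order operator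
`w ∂ w`, so `U (-∂²) U⁻¹ = -(w ∂ w)²`. Expanding this square with the Leibniz rule and inserting
`w' = -ψ'' w³ / 2` gives the three coefficients. -/

open Filter Topology

section WeightedDerivative

variable {E : Type*} [NormedAddCommGroup E] [NormedSpace ℝ E] {w : ℝ → ℝ} {f : ℝ → E} {x : ℝ}

/-- The first-order operator `w ∂ w`, i.e. `f ↦ w (w f)'`; for `w = (ψ')^(-1/2)` it is the
conjugate of `∂` by the dilation along `ψ`. -/
noncomputable def weightedDeriv (w : ℝ → ℝ) (f : ℝ → E) : ℝ → E :=
  fun x => w x • deriv (fun y => w y • f y) x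

lemma weightedDeriv_eq (hw : DifferentiableAt ℝ w x) (hf : DifferentiableAt ℝ f x) :
    weightedDeriv w f x = w x ^ 2 • deriv f x + (w x * deriv w x) • f x := by
  rw [weightedDeriv, deriv_fun_smul hw hf]
  module

lemma contDiffAt_weightedDeriv {m n : WithTop ℕ∞} (hw : ContDiffAt ℝ n w x)
    (hf : ContDiffAt ℝ n f x) (hmn : m + 1 ≤ n) : ContDiffAt ℝ m (weightedDeriv w f) x :=
  (hw.of_le (le_self_add.trans hmn)).smul ((hw.smul hf).derivWithin hmn)

lemma weightedDeriv_eventuallyEq (hw : ContDiffAt ℝ 1 w x) (hf : ContDiffAt ℝ 1 f x) :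
    weightedDeriv w f =ᶠ[𝓝 x] fun y => w y ^ 2 • deriv f y + (w y * deriv w y) • f y := by
  filter_upwards [hw.eventually (by simp), hf.eventually (by simp)] with y hwy hfy
  exact weightedDeriv_eq (hwy.differentiableAt one_ne_zero) (hfy.differentiableAt one_ne_zero)

lemma weightedDeriv_weightedDeriv (hw : ContDiffAt ℝ 2 w x) (hf : ContDiffAt ℝ 2 f x) :
    weightedDeriv w (weightedDeriv w f) x =
      w x ^ 4 • deriv (deriv f) x + (4 * w x ^ 3 * deriv w x) • deriv f x +
        (2 * w x ^ 2 * deriv w x ^ 2 + w x ^ 3 * deriv (deriv w) x) • f x := by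
  have dw : HasDerivAt w (deriv w x) x := (hw.differentiableAt two_ne_zero).hasDerivAt
  have df : HasDerivAt f (deriv f x) x := (hf.differentiableAt two_ne_zero).hasDerivAt
  have ddw : HasDerivAt (deriv w) (deriv (deriv w) x) x :=
    ((hw.derivWithin (m := 1) (by norm_num)).differentiableAt one_ne_zero).hasDerivAt
  have ddf : HasDerivAt (deriv f) (deriv (deriv f) x) x :=
    ((hf.derivWithin (m := 1) (by norm_num)).differentiableAt one_ne_zero).hasDerivAt
  have expand : weightedDeriv w f =ᶠ[𝓝 x] _ :=
    weightedDeriv_eventuallyEq (hw.of_le one_le_two) (hf.of_le one_le_two)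
  have dexpand : HasDerivAt (weightedDeriv w f) _ x :=
    (((dw.fun_pow 2).fun_smul ddf).fun_add ((dw.fun_mul ddw).fun_smul df)).congr_of_eventuallyEq
      expand
  rw [weightedDeriv_eq dw.differentiableAt dexpand.differentiableAt, dexpand.deriv,
    expand.self_of_nhds]
  module

end WeightedDerivative

section InverseSqrt

variable {p : ℝ → ℝ} {x : ℝ}

lemma hasDerivAt_inv_sqrt {p' : ℝ} (hp : HasDerivAt p p' x) (hpos : 0 < p x) :
    HasDerivAt (fun y => (√(p y))⁻¹) (-(1 / 2) * p' * (√(p x))⁻¹ ^ 3) x := by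
  refine ((hp.sqrt hpos.ne').fun_inv (Real.sqrt_pos.2 hpos).ne').congr_deriv ?_
  field_simp

lemma contDiffAt_inv_sqrt {n : WithTop ℕ∞} (hp : ContDiffAt ℝ n p x) (hpos : 0 < p x) :
    ContDiffAt ℝ n (fun y => (√(p y))⁻¹) x :=
  (hp.sqrt hpos.ne').inv (Real.sqrt_pos.2 hpos).ne'

lemma deriv_deriv_inv_sqrt (hp : ContDiffAt ℝ 2 p x) (hpos : 0 < p x) :
    deriv (deriv fun y => (√(p y))⁻¹) x =
      3 / 4 * deriv p x ^ 2 * (√(p x))⁻¹ ^ 5 - 1 / 2 * deriv (deriv p) x * (√(p x))⁻¹ ^ 3 := by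
  have hderiv : deriv (fun y => (√(p y))⁻¹) =ᶠ[𝓝 x]
      fun y => -(1 / 2) * deriv p y * (√(p y))⁻¹ ^ 3 := by
    filter_upwards [hp.eventually (by simp), hp.continuousAt.eventually_const_lt hpos]
      with y hpy hposy
    exact (hasDerivAt_inv_sqrt (hpy.differentiableAt two_ne_zero).hasDerivAt hposy).deriv
  have dp : HasDerivAt p (deriv p x) x := (hp.differentiableAt two_ne_zero).hasDerivAt
  have ddp : HasDerivAt (deriv p) (deriv (deriv p) x) x :=
    ((hp.derivWithin (m := 1) (by norm_num)).differentiableAt one_ne_zero).hasDerivAt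
  rw [hderiv.deriv_eq, ((ddp.const_mul (-(1 / 2))).fun_mul
    ((hasDerivAt_inv_sqrt dp hpos).fun_pow 3)).deriv]
  ring

end InverseSqrt

lemma hasDerivAt_comp_of_left_inverse {𝕜 F : Type*} [NontriviallyNormedField 𝕜] [CompleteSpace 𝕜]
    [NormedAddCommGroup F] [NormedSpace 𝕜 F] {ψ α : 𝕜 → 𝕜} {g : 𝕜 → F} {ψ' x : 𝕜} {g' : F}
    (hg : HasDerivAt g g' x) (hψ : HasStrictDerivAt ψ ψ' x) (hψ' : ψ' ≠ 0)
    (hα : ∀ᶠ y in 𝓝 x, α (ψ y) = y) :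
    HasDerivAt (fun v => g (α v)) (ψ'⁻¹ • g') (ψ x) :=
  HasDerivAt.scomp_of_eq (ψ x) hg (hψ.to_local_left_inverse hψ' hα).hasDerivAt
    hα.self_of_nhds.symm

section Dilation

variable {E : Type*} [NormedAddCommGroup E] [NormedSpace ℝ E]

/-- The dilation operator `U` along `ψ`, which is unitary on `L²` when `ψ` is an increasing
diffeomorphism. -/
noncomputable def dilation (ψ : ℝ → ℝ) (g : ℝ → E) : ℝ → E :=
  fun u => √(deriv ψ u) • g (ψ u)

/-- The weight `w = (ψ')^(-1/2)` for which `U ∂ U⁻¹ = w ∂ w`; it is meaningful only where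
`0 < ψ'`. -/
noncomputable def dilationWeight (ψ : ℝ → ℝ) : ℝ → ℝ :=
  fun u => (√(deriv ψ u))⁻¹

/-- The inverse `U⁻¹` of the dilation along `ψ`, where `α` plays the role of the inverse
function of `ψ`. -/
noncomputable def dilationInv (ψ α : ℝ → ℝ) (f : ℝ → E) : ℝ → E :=
  fun v => dilationWeight ψ (α v) • f (α v)

variable {ψ α : ℝ → ℝ} {f : ℝ → E} {u : ℝ}

lemma dilation_dilationInv (hpos : 0 < deriv ψ u) (hα : α (ψ u) = u) :
    dilation ψ (dilationInv ψ α f) u = f u := by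
  rw [dilation, dilationInv, hα, dilationWeight, smul_inv_smul₀ (Real.sqrt_pos.2 hpos).ne']

lemma contDiffAt_dilationWeight {m n : WithTop ℕ∞} (hψ : ContDiffAt ℝ n ψ u)
    (hmn : m + 1 ≤ n) (hpos : 0 < deriv ψ u) : ContDiffAt ℝ m (dilationWeight ψ) u :=
  contDiffAt_inv_sqrt (hψ.derivWithin hmn) hpos

lemma hasDerivAt_dilationInv (hψ : ContDiffAt ℝ 2 ψ u) (hpos : 0 < deriv ψ u)
    (hα : ∀ᶠ x in 𝓝 u, α (ψ x) = x) (hf : DifferentiableAt ℝ f u) :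
    HasDerivAt (dilationInv ψ α f)
      (dilationInv ψ α (weightedDeriv (dilationWeight ψ) f) (ψ u)) (ψ u) := by
  have hw : DifferentiableAt ℝ (dilationWeight ψ) u :=
    (contDiffAt_dilationWeight (m := 1) hψ (by norm_num) hpos).differentiableAt one_ne_zero
  have hww : dilationWeight ψ u * dilationWeight ψ u = (deriv ψ u)⁻¹ := by
    rw [dilationWeight, ← mul_inv, Real.mul_self_sqrt hpos.le]
  refine (hasDerivAt_comp_of_left_inverse (hw.fun_smul hf).hasDerivAt
    (hψ.hasStrictDerivAt two_ne_zero) hpos.ne' hα).congr_deriv ?_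
  rw [dilationInv, hα.self_of_nhds, weightedDeriv, smul_smul, hww]

lemma deriv_dilationInv_eventuallyEq (hψ : ContDiffAt ℝ 2 ψ u) (hpos : 0 < deriv ψ u)
    (hα : ∀ᶠ x in 𝓝 u, α (ψ x) = x) (hf : ContDiffAt ℝ 1 f u) :
    deriv (dilationInv ψ α f) =ᶠ[𝓝 (ψ u)]
      dilationInv ψ α (weightedDeriv (dilationWeight ψ) f) := by
  have hψ'_cont : ContinuousAt (deriv ψ) u := (hψ.derivWithin (m := 1) (by norm_num)).continuousAt
  -- Points near `ψ u` are images of points near `u`, so `α` need not be a right inverse.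
  rw [EventuallyEq, ← (hψ.hasStrictDerivAt two_ne_zero).map_nhds_eq hpos.ne', eventually_map]
  filter_upwards [hψ.eventually (by simp), hψ'_cont.eventually_const_lt hpos,
    hα.eventually_nhds, hf.eventually (by simp)] with x hψx hposx hαx hfx
  exact (hasDerivAt_dilationInv hψx hposx hαx (hfx.differentiableAt one_ne_zero)).deriv

lemma dilation_deriv_deriv_dilationInv (hψ : ContDiffAt ℝ 3 ψ u) (hpos : 0 < deriv ψ u)
    (hα : ∀ᶠ x in 𝓝 u, α (ψ x) = x) (hf : ContDiffAt ℝ 2 f u) :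
    dilation ψ (deriv (deriv (dilationInv ψ α f))) u =
      weightedDeriv (dilationWeight ψ) (weightedDeriv (dilationWeight ψ) f) u := by
  have hw : ContDiffAt ℝ 2 (dilationWeight ψ) u :=
    contDiffAt_dilationWeight hψ (by norm_num) hpos
  have hBf : DifferentiableAt ℝ (weightedDeriv (dilationWeight ψ) f) u :=
    (contDiffAt_weightedDeriv (m := 1) hw hf (by norm_num)).differentiableAt one_ne_zero
  have hψ2 : ContDiffAt ℝ 2 ψ u := hψ.of_le (by norm_num)
  have hderiv2 : deriv (deriv (dilationInv ψ α f)) (ψ u) =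
      dilationInv ψ α (weightedDeriv (dilationWeight ψ) (weightedDeriv (dilationWeight ψ) f))
        (ψ u) := by
    rw [(deriv_dilationInv_eventuallyEq hψ2 hpos hα (hf.of_le one_le_two)).deriv_eq,
      (hasDerivAt_dilationInv hψ2 hpos hα hBf).deriv]
  rw [dilation, hderiv2]
  exact dilation_dilationInv hpos hα.self_of_nhds

theorem stmt_2_general (hψ : ContDiffAt ℝ 3 ψ u) (hpos : 0 < deriv ψ u)
    (hα : ∀ᶠ x in 𝓝 u, α (ψ x) = x) (hf : ContDiffAt ℝ 2 f u) :
    dilation ψ (-deriv (deriv (dilationInv ψ α f))) u =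
      (-(1 / deriv ψ u ^ 2)) • deriv (deriv f) u +
        (2 * deriv (deriv ψ) u / deriv ψ u ^ 3) • deriv f u +
        ((1 / 2) * deriv (deriv (deriv ψ)) u / deriv ψ u ^ 3
          - (5 / 4) * deriv (deriv ψ) u ^ 2 / deriv ψ u ^ 4) • f u := by
  have hψ' : ContDiffAt ℝ 2 (deriv ψ) u := hψ.derivWithin (by norm_num)
  have hw : ContDiffAt ℝ 2 (dilationWeight ψ) u :=
    contDiffAt_dilationWeight hψ (by norm_num) hpos
  have hw' : deriv (dilationWeight ψ) u = _ :=
    (hasDerivAt_inv_sqrt (hψ'.differentiableAt two_ne_zero).hasDerivAt hpos).deriv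
  have hw'' : deriv (deriv (dilationWeight ψ)) u = _ := deriv_deriv_inv_sqrt hψ' hpos
  have hneg : dilation ψ (-deriv (deriv (dilationInv ψ α f))) u =
      -dilation ψ (deriv (deriv (dilationInv ψ α f))) u := smul_neg _ _
  rw [hneg, dilation_deriv_deriv_dilationInv hψ hpos hα hf, weightedDeriv_weightedDeriv hw hf,
    hw', hw'', dilationWeight]
  have hs : √(deriv ψ u) ≠ 0 := (Real.sqrt_pos.2 hpos).ne'
  have hsq : deriv ψ u = √(deriv ψ u) ^ 2 := (Real.sq_sqrt hpos.le).symm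
  generalize √(deriv ψ u) = s at *
  rw [hsq]
  match_scalars <;> field_simp <;> ring

end Dilation

section ExteriorScaling

/-- The exterior scaling map `ψ_θ`, which is the identity where `φ = 0` and dilates by `θ + 1`
where `φ = 1`. -/
def exteriorScaling (φ : ℝ → ℝ) (θ u : ℝ) : ℝ :=
  (φ u * θ + 1) * u

variable {φ : ℝ → ℝ} {θ u : ℝ}

lemma contDiff_exteriorScaling {n : WithTop ℕ∞} (hφ : ContDiff ℝ n φ) :
    ContDiff ℝ n (exteriorScaling φ θ) := by
  unfold exteriorScaling
  fun_prop

lemma deriv_exteriorScaling (hφ : DifferentiableAt ℝ φ u) :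
    deriv (exteriorScaling φ θ) u = deriv φ u * u * θ + φ u * θ + 1 := by
  refine (((hφ.hasDerivAt.mul_const θ).add_const 1).fun_mul (hasDerivAt_id' u)).deriv.trans ?_
  ring

lemma deriv_exteriorScaling_pos (hφ : DifferentiableAt ℝ φ u) (hφ0 : 0 ≤ φ u)
    (hφ' : 0 ≤ deriv φ u) (hθ : 0 ≤ θ) (hu : 0 ≤ u) : 0 < deriv (exteriorScaling φ θ) u := by
  rw [deriv_exteriorScaling hφ]
  positivity

end ExteriorScaling

/-- For real `θ > 0` and smooth `f : (0,∞) → ℂ`, the conjugated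
operator satisfies `U_θ(−(d²/du²)(U_θ⁻¹ f))(u) = a₂(θ,u) f''(u) + a₁(θ,u) f'(u) + a₀(θ,u) f(u)`
for all `u > 0`, where `(U_θ g)(u) = g(ψ_θ(u))·ψ_θ'(u)^{1/2}` and
`(U_θ⁻¹ f)(u) = f(α_θ(u))·ψ_θ'(α_θ(u))^{-1/2}`, with
`a₂ = −1/ψ_θ'(u)²`, `a₁ = 2ψ_θ''(u)/ψ_θ'(u)³`,
`a₀ = (1/2)ψ_θ'''(u)/ψ_θ'(u)³ − (5/4)ψ_θ''(u)²/ψ_θ'(u)⁴`. -/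
theorem stmt_2
    (K R : ℝ) (hK : 2 < K) (hKR : K < R)
    (φ : ℝ → ℝ) (hφ : ContDiff ℝ (⊤ : ℕ∞) φ)
    (hφ0 : ∀ u, 0 ≤ φ u) (hφ1 : ∀ u, φ u ≤ 1)
    (hφ' : ∀ u, 0 ≤ deriv φ u)
    (hφK : ∀ u, u < K → φ u = 0)
    (hφR : ∀ u, R < u → φ u = 1)
    (θ : ℝ) (hθ : 0 < θ)
    (ψ α : ℝ → ℝ)
    (hψ : ∀ u, ψ u = (φ u * θ + 1) * u)
    (hbij : BijOn ψ (Ici (0 : ℝ)) (Ici (0 : ℝ)))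
    (hα : InvOn α ψ (Ici (0 : ℝ)) (Ici (0 : ℝ)))
    (f : ℝ → ℂ) (hf : ContDiffOn ℝ (⊤ : ℕ∞) f (Ioi 0)) :
    ∀ u : ℝ, 0 < u →
      (-(deriv (deriv (fun v : ℝ =>
          f (α v) * (((Real.sqrt (deriv ψ (α v)))⁻¹ : ℝ) : ℂ))) (ψ u)))
        * ((Real.sqrt (deriv ψ u) : ℝ) : ℂ)
      = ((-(1 / (deriv ψ u) ^ 2) : ℝ) : ℂ) * deriv (deriv f) u
        + ((2 * deriv (deriv ψ) u / (deriv ψ u) ^ 3 : ℝ) : ℂ) * deriv f u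
        + (((1 / 2) * deriv (deriv (deriv ψ)) u / (deriv ψ u) ^ 3
            - (5 / 4) * (deriv (deriv ψ) u) ^ 2 / (deriv ψ u) ^ 4 : ℝ) : ℂ) * f u := by
  intro u hu
  obtain rfl : ψ = exteriorScaling φ θ := funext hψ
  have hpos : 0 < deriv (exteriorScaling φ θ) u :=
    deriv_exteriorScaling_pos (hφ.differentiable (by simp) u) (hφ0 u) (hφ' u) hθ.le hu.le
  have hleft : ∀ᶠ x in 𝓝 u, α (exteriorScaling φ θ x) = x := by
    filter_upwards [Ioi_mem_nhds hu] with x hx using hα.1 (mem_Ioi.1 hx).le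
  have hψ3 : ContDiffAt ℝ 3 (exteriorScaling φ θ) u :=
    ((contDiff_exteriorScaling hφ).of_le (by norm_cast)).contDiffAt
  have hf2 : ContDiffAt ℝ 2 f u :=
    (hf.contDiffAt (Ioi_mem_nhds hu)).of_le (by norm_cast)
  have hUinv : (fun v => f (α v) * (((√(deriv (exteriorScaling φ θ) (α v)))⁻¹ : ℝ) : ℂ)) =
      dilationInv (exteriorScaling φ θ) α f :=
    funext fun v => (mul_comm _ _).trans Complex.real_smul.symm
  rw [hUinv, mul_comm]
  exact stmt_2_general hψ3 hpos hleft hf2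
end

section
/- For every θ ∈ Γ there exists a constant C₀ > 0 such that −Re(a_2(θ,u)) ≥ C₀ for all u ≥ 0. In particular, writing B(u) := φ'(u)u + φ(u) ≥ 0 and θ = θ₀ + iθ₁, one has Re(ψ_θ'(u)²) = (B(u)θ₀ + 1)² − B(u)²θ₁² ≥ 1 for all u ≥ 0 when θ ∈ Γ. -/
open Set

/-!
With `B u = φ' u * u + φ u`, the derivative is `ψ_θ' u = 1 + B u θ`, where `B u θ` stays in the
cone `|Im z| ≤ Re z` because `B ≥ 0`. On that cone
`Re ((1 + z)²) = 1 + 2 Re z + (Re z)² - (Im z)² ≥ 1`. Since `Re (1 / w) = Re w / ‖w‖²`, taking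
`w = (1 + z)²` bounds `-Re a₂` below by `1 / ‖1 + z‖⁴`, so a bound on `B` over `[0, ∞)` suffices.
-/

open Filter Topology

theorem bddAbove_image_Ici_of_isBoundedUnder_atTop {α β : Type*} [LinearOrder α]
    [TopologicalSpace α] [CompactIccSpace α] [LinearOrder β] [TopologicalSpace β]
    [ClosedIciTopology β] {f : α → β} {a : α} (hf : ContinuousOn f (Ici a))
    (hbdd : IsBoundedUnder (· ≤ ·) atTop f) : BddAbove (f '' Ici a) := by
  have : Nonempty α := ⟨a⟩
  have : Nonempty β := ⟨f a⟩
  obtain ⟨M, hM⟩ := hbdd.eventually_le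
  obtain ⟨b, hb⟩ := eventually_atTop.1 hM
  have hcompact : BddAbove (f '' Icc a b) :=
    isCompact_Icc.bddAbove_image (hf.mono Icc_subset_Ici_self)
  have htail : BddAbove (f '' Ici b) := ⟨M, forall_mem_image.2 hb⟩
  refine (hcompact.union htail).mono ?_
  rw [← image_union]
  exact image_mono Ici_subset_Icc_union_Ici

section Sector

variable {z : ℂ}

theorem abs_im_ofReal_mul_le_re {b : ℝ} (hb : 0 ≤ b) (hz : |z.im| ≤ z.re) :
    |((b : ℂ) * z).im| ≤ ((b : ℂ) * z).re := by
  rw [Complex.im_ofReal_mul, Complex.re_ofReal_mul, abs_mul, abs_of_nonneg hb]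
  exact mul_le_mul_of_nonneg_left hz hb

theorem re_one_add_sq (z : ℂ) : ((1 + z) ^ 2).re = (z.re + 1) ^ 2 - z.im ^ 2 := by
  simp only [sq, Complex.mul_re, Complex.add_re, Complex.add_im, Complex.one_re, Complex.one_im]
  ring

theorem one_le_re_one_add_sq (hz : |z.im| ≤ z.re) : 1 ≤ ((1 + z) ^ 2).re := by
  have hre : 0 ≤ z.re := (abs_nonneg _).trans hz
  have hsq : z.im ^ 2 ≤ z.re ^ 2 := sq_le_sq.2 (hz.trans (le_abs_self _))
  rw [re_one_add_sq]
  linarith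

theorem div_norm_sq_le_re_inv {c : ℝ} (hc : c ≤ z.re) : c / ‖z‖ ^ 2 ≤ (z⁻¹).re := by
  rw [Complex.inv_re, Complex.normSq_eq_norm_sq]
  gcongr

theorem inv_one_add_pow_four_le_re_inv_one_add_sq {r : ℝ} (hz : |z.im| ≤ z.re) (hr : ‖z‖ ≤ r) :
    ((1 + r) ^ 4)⁻¹ ≤ (((1 + z) ^ 2)⁻¹).re := by
  have hone : 1 ≤ ((1 + z) ^ 2).re := one_le_re_one_add_sq hz
  have hpos : 0 < ‖(1 + z) ^ 2‖ := one_pos.trans_le (hone.trans (Complex.re_le_norm _))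
  have hle : ‖(1 + z) ^ 2‖ ≤ (1 + r) ^ 2 := by
    rw [norm_pow]
    gcongr
    exact (norm_add_le _ _).trans (by simpa using hr)
  calc ((1 + r) ^ 4)⁻¹ = 1 / ((1 + r) ^ 2) ^ 2 := by ring
    _ ≤ 1 / ‖(1 + z) ^ 2‖ ^ 2 := by gcongr
    _ ≤ _ := div_norm_sq_le_re_inv hone

end Sector

/-- The function `B` of the paper: the derivative of `u ↦ φ u * u`, expanded by the product rule,
so that `ψ_θ' u = 1 + B u * θ`. -/
noncomputable def derivMulId (φ : ℝ → ℝ) (u : ℝ) : ℝ :=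
  deriv φ u * u + φ u

section DerivMulId

variable {φ : ℝ → ℝ} {u : ℝ}

theorem derivMulId_nonneg (hu : 0 ≤ u) (hφ : 0 ≤ φ u) (hφ' : 0 ≤ deriv φ u) :
    0 ≤ derivMulId φ u :=
  add_nonneg (mul_nonneg hφ' hu) hφ

theorem continuous_derivMulId (hφ : ContDiff ℝ 1 φ) : Continuous (derivMulId φ) :=
  ((hφ.continuous_deriv le_rfl).mul continuous_id).add hφ.continuous

theorem derivMulId_eq_of_eventuallyEq_const {c : ℝ} (h : φ =ᶠ[𝓝 u] fun _ => c) :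
    derivMulId φ u = c := by
  rw [derivMulId, h.deriv_eq, deriv_const, zero_mul, zero_add, h.eq_of_nhds]

theorem isBoundedUnder_le_derivMulId {c R : ℝ} (h : ∀ u, R < u → φ u = c) :
    IsBoundedUnder (· ≤ ·) atTop (derivMulId φ) := by
  refine isBoundedUnder_of_eventually_le (a := c) ?_
  filter_upwards [eventually_gt_atTop R] with u hu
  exact (derivMulId_eq_of_eventuallyEq_const ((eventually_gt_nhds hu).mono h)).le

end DerivMulId

theorem stmt_5_general {φ : ℝ → ℝ} (hφ : ContDiff ℝ 1 φ) (hφ0 : ∀ u, 0 ≤ u → 0 ≤ φ u)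
    (hφ' : ∀ u, 0 ≤ u → 0 ≤ deriv φ u)
    (hbdd : IsBoundedUnder (· ≤ ·) atTop (derivMulId φ)) {θ : ℂ} (hθ : |θ.im| ≤ θ.re)
    {ψ' : ℝ → ℂ}
    (hψ' : ∀ u, ψ' u = ((deriv φ u * u : ℝ) : ℂ) * θ + ((φ u : ℝ) : ℂ) * θ + 1)
    {a₂ : ℝ → ℂ} (ha₂ : ∀ u, a₂ u = -(1 / ψ' u ^ 2)) :
    (∃ C₀ : ℝ, 0 < C₀ ∧ ∀ u : ℝ, 0 ≤ u → C₀ ≤ -(a₂ u).re) ∧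
    (∀ u : ℝ, 0 ≤ u →
      0 ≤ derivMulId φ u ∧
      (ψ' u ^ 2).re = (derivMulId φ u * θ.re + 1) ^ 2 - derivMulId φ u ^ 2 * θ.im ^ 2 ∧
      1 ≤ (ψ' u ^ 2).re) := by
  have hψB (u : ℝ) : ψ' u = 1 + derivMulId φ u * θ := by
    rw [hψ', derivMulId, Complex.ofReal_add]
    ring
  have hB (u : ℝ) (hu : 0 ≤ u) : 0 ≤ derivMulId φ u :=
    derivMulId_nonneg hu (hφ0 u hu) (hφ' u hu)
  have hcone (u : ℝ) (hu : 0 ≤ u) := abs_im_ofReal_mul_le_re (hB u hu) hθ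
  constructor
  · obtain ⟨M, hM⟩ := bddAbove_image_Ici_of_isBoundedUnder_atTop (a := 0)
      (continuous_derivMulId hφ).continuousOn hbdd
    have hBM (u : ℝ) (hu : 0 ≤ u) : derivMulId φ u ≤ M := hM (mem_image_of_mem _ hu)
    have hM0 : 0 ≤ M := (hB 0 le_rfl).trans (hBM 0 le_rfl)
    refine ⟨((1 + M * ‖θ‖) ^ 4)⁻¹, by positivity, fun u hu => ?_⟩
    have hnorm : ‖(derivMulId φ u : ℂ) * θ‖ ≤ M * ‖θ‖ := by
      rw [norm_mul, Complex.norm_of_nonneg (hB u hu)]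
      exact mul_le_mul_of_nonneg_right (hBM u hu) (norm_nonneg θ)
    rw [ha₂, hψB, Complex.neg_re, neg_neg, one_div]
    exact inv_one_add_pow_four_le_re_inv_one_add_sq (hcone u hu) hnorm
  · refine fun u hu => ⟨hB u hu, ?_, hψB u ▸ one_le_re_one_add_sq (hcone u hu)⟩
    rw [hψB, re_one_add_sq, Complex.re_ofReal_mul, Complex.im_ofReal_mul, mul_pow]

/-- For every `θ ∈ Γ` there exists `C₀ > 0` with
`−Re(a₂(θ,u)) ≥ C₀` for all `u ≥ 0`. Moreover, writing `B(u) = φ'(u)u + φ(u) ≥ 0`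
and `θ = θ₀ + iθ₁`, one has `Re(ψ_θ'(u)²) = (B(u)θ₀+1)² − B(u)²θ₁² ≥ 1`
for all `u ≥ 0` when `θ ∈ Γ`. -/
theorem stmt_5
    (K R : ℝ) (hK : 2 < K) (hKR : K < R)
    (φ : ℝ → ℝ) (hφ : ContDiff ℝ (⊤ : ℕ∞) φ)
    (hφ0 : ∀ u, 0 ≤ φ u) (hφ1 : ∀ u, φ u ≤ 1)
    (hφ' : ∀ u, 0 ≤ deriv φ u)
    (hφK : ∀ u, u < K → φ u = 0)
    (hφR : ∀ u, R < u → φ u = 1)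
    (ψ' : ℂ → ℝ → ℂ)
    (hψ' : ∀ θ u, ψ' θ u = ((deriv φ u * u : ℝ) : ℂ) * θ + ((φ u : ℝ) : ℂ) * θ + 1)
    (a₂ : ℂ → ℝ → ℂ)
    (ha₂ : ∀ θ u, a₂ θ u = -(1 / (ψ' θ u) ^ 2))
    (θ : ℂ) (hθre : 0 < θ.re) (hθim : |θ.im| ≤ θ.re) (hθim2 : θ.im ^ 2 < 1 / 2) :
    (∃ C₀ : ℝ, 0 < C₀ ∧ ∀ u : ℝ, 0 ≤ u → C₀ ≤ -(a₂ θ u).re) ∧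
    (∀ u : ℝ, 0 ≤ u →
      0 ≤ deriv φ u * u + φ u ∧
      ((ψ' θ u) ^ 2).re
        = ((deriv φ u * u + φ u) * θ.re + 1) ^ 2 - (deriv φ u * u + φ u) ^ 2 * θ.im ^ 2 ∧
      1 ≤ ((ψ' θ u) ^ 2).re) := by
  exact stmt_5_general (hφ.of_le (by norm_cast)) (fun u _ => hφ0 u) (fun u _ => hφ' u)
    (isBoundedUnder_le_derivMulId hφR) hθim (hψ' θ) (ha₂ θ)
end

section
/- For every θ ∈ Γ there exists a constant k > 0 such that Re(ψ_θ'(u)²) − k·|Im(ψ_θ'(u)²)| ≥ 0 for all u ≥ 0. -/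
open Set

/-!
Write `ψ_θ'(u) = 1 + a(u) θ` with `a(u) = φ'(u) u + φ(u)`, which is nonnegative, and bounded on
`[0, ∞)` because `φ` is eventually constant. As `|θ₁| ≤ θ₀`, every `z = 1 + a θ` with `a ≥ 0`
satisfies `Re z - |Im z| ≥ 1`. Hence `Re z² = (Re z - |Im z|) (Re z + |Im z|) ≥ Re z`, whereas
`|Im z²| = 2 Re z |Im z|` is at most a constant multiple of `Re z` for bounded `a`.
-/

open Filter

theorem bddAbove_image_Ici_of_isBoundedUnder {α β : Type*} [LinearOrder α] [TopologicalSpace α]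
    [CompactIccSpace α] [LinearOrder β] [TopologicalSpace β] [ClosedIciTopology β] {f : α → β}
    {a : α} (hf : ContinuousOn f (Ici a)) (hbdd : atTop.IsBoundedUnder (· ≤ ·) f) :
    BddAbove (f '' Ici a) := by
  have : Nonempty α := ⟨a⟩
  have : Nonempty β := ⟨f a⟩
  obtain ⟨B, hB⟩ := hbdd.eventually_le
  obtain ⟨N, hN⟩ := eventually_atTop.1 hB
  have hleft : BddAbove (f '' Icc a N) :=
    isCompact_Icc.bddAbove_image (hf.mono Icc_subset_Ici_self)
  have hright : BddAbove (f '' Ici N) := ⟨B, forall_mem_image.2 hN⟩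
  refine (hleft.union hright).mono ?_
  rw [← image_union]
  exact image_mono Ici_subset_Icc_union_Ici

theorem deriv_eventuallyEq_atTop {𝕜 F : Type*} [NontriviallyNormedField 𝕜] [LinearOrder 𝕜]
    [ClosedIicTopology 𝕜] [NoMaxOrder 𝕜] [NormedAddCommGroup F] [NormedSpace 𝕜 F] {f g : 𝕜 → F}
    (h : f =ᶠ[atTop] g) : deriv f =ᶠ[atTop] deriv g := by
  obtain ⟨N, hN⟩ := eventually_atTop.1 h
  filter_upwards [eventually_gt_atTop N] with x hx
  have hnhds : f =ᶠ[nhds x] g := (eventually_ge_nhds hx).mono hN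
  exact hnhds.deriv_eq

theorem mul_abs_im_sq_le_mul_re_sq {z : ℂ} {δ M : ℝ} (hδ : 0 ≤ δ) (hsector : δ ≤ z.re - |z.im|)
    (hM : |z.im| ≤ M) : δ * |(z ^ 2).im| ≤ 2 * M * (z ^ 2).re := by
  have him_nonneg : 0 ≤ |z.im| := abs_nonneg _
  have hre : 0 ≤ z.re := by linarith
  have him_sq : |(z ^ 2).im| = 2 * z.re * |z.im| := by
    rw [sq, Complex.mul_im, mul_comm z.im, ← two_mul, ← mul_assoc, abs_mul,
      abs_of_nonneg (by positivity)]
  have hre_sq : (z ^ 2).re = (z.re - |z.im|) * (z.re + |z.im|) := by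
    rw [sq, Complex.mul_re]
    linear_combination sq_abs z.im
  calc
    δ * |(z ^ 2).im| = 2 * |z.im| * (δ * z.re) := by rw [him_sq]; ring
    _ ≤ 2 * M * ((z.re - |z.im|) * (z.re + |z.im|)) := by
      gcongr
      · linarith
      · exact hδ.trans hsector
      · exact le_add_of_nonneg_right him_nonneg
    _ = 2 * M * (z ^ 2).re := by rw [hre_sq]

theorem exists_pos_mul_abs_im_sq_le_re_sq {θ : ℂ} (hθ : |θ.im| ≤ θ.re) (B : ℝ) :
    ∃ k : ℝ, 0 < k ∧ ∀ a ∈ Icc 0 B,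
      k * |((1 + a * θ) ^ 2).im| ≤ ((1 + a * θ) ^ 2).re := by
  refine ⟨(2 * max 1 (B * |θ.im|))⁻¹, by positivity, fun a ⟨ha, haB⟩ ↦ ?_⟩
  have hre : (1 + a * θ : ℂ).re = 1 + a * θ.re := by simp
  have him : |(1 + a * θ : ℂ).im| = a * |θ.im| := by simp [abs_mul, abs_of_nonneg ha]
  have hsector : 1 ≤ (1 + a * θ : ℂ).re - |(1 + a * θ : ℂ).im| := by
    rw [hre, him]
    linarith [mul_le_mul_of_nonneg_left hθ ha]
  have him_le : |(1 + a * θ : ℂ).im| ≤ max 1 (B * |θ.im|) := by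
    rw [him]
    exact le_max_of_le_right (by gcongr)
  rw [inv_mul_le_iff₀ (by positivity)]
  simpa only [one_mul] using mul_abs_im_sq_le_mul_re_sq zero_le_one hsector him_le

theorem stmt_6_general {φ : ℝ → ℝ} {c : ℝ} (hφ : ContDiff ℝ 1 φ)
    (hφ_nonneg : ∀ u, 0 ≤ u → 0 ≤ deriv φ u * u + φ u) (hφ_const : ∀ᶠ u in atTop, φ u = c)
    {ψ' : ℝ → ℂ} {θ : ℂ}
    (hψ' : ∀ u, ψ' u = ((deriv φ u * u : ℝ) : ℂ) * θ + ((φ u : ℝ) : ℂ) * θ + 1)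
    (hθ : |θ.im| ≤ θ.re) :
    ∃ k : ℝ, 0 < k ∧ ∀ u : ℝ, 0 ≤ u → 0 ≤ (ψ' u ^ 2).re - k * |(ψ' u ^ 2).im| := by
  have hcont : Continuous fun u ↦ deriv φ u * u + φ u :=
    (hφ.continuous_deriv_one.mul continuous_id).add hφ.continuous
  have hbdd : atTop.IsBoundedUnder (· ≤ ·) fun u ↦ deriv φ u * u + φ u := by
    refine isBoundedUnder_of_eventually_le (a := c) ?_
    filter_upwards [hφ_const, deriv_eventuallyEq_atTop hφ_const] with u hu hu'
    rw [hu, hu', deriv_const, zero_mul, zero_add]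
  obtain ⟨B, hB⟩ := bddAbove_image_Ici_of_isBoundedUnder (a := 0) hcont.continuousOn hbdd
  obtain ⟨k, hk, hsq⟩ := exists_pos_mul_abs_im_sq_le_re_sq hθ B
  refine ⟨k, hk, fun u hu ↦ sub_nonneg.2 ?_⟩
  have hψ'_eq : ψ' u = 1 + ((deriv φ u * u + φ u : ℝ) : ℂ) * θ := by
    rw [hψ']
    push_cast
    ring
  rw [hψ'_eq]
  exact hsq _ ⟨hφ_nonneg u hu, hB (mem_image_of_mem _ hu)⟩

/-- For every `θ ∈ Γ` there exists `k > 0` such that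
`Re(ψ_θ'(u)²) − k·|Im(ψ_θ'(u)²)| ≥ 0` for all `u ≥ 0`. -/
theorem stmt_6
    (K R : ℝ) (hK : 2 < K) (hKR : K < R)
    (φ : ℝ → ℝ) (hφ : ContDiff ℝ (⊤ : ℕ∞) φ)
    (hφ0 : ∀ u, 0 ≤ φ u) (hφ1 : ∀ u, φ u ≤ 1)
    (hφ' : ∀ u, 0 ≤ deriv φ u)
    (hφK : ∀ u, u < K → φ u = 0)
    (hφR : ∀ u, R < u → φ u = 1)
    (ψ' : ℂ → ℝ → ℂ)
    (hψ' : ∀ θ u, ψ' θ u = ((deriv φ u * u : ℝ) : ℂ) * θ + ((φ u : ℝ) : ℂ) * θ + 1)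
    (θ : ℂ) (hθre : 0 < θ.re) (hθim : |θ.im| ≤ θ.re) (hθim2 : θ.im ^ 2 < 1 / 2) :
    ∃ k : ℝ, 0 < k ∧ ∀ u : ℝ, 0 ≤ u →
      0 ≤ ((ψ' θ u) ^ 2).re - k * |((ψ' θ u) ^ 2).im| :=
  stmt_6_general (hφ.of_le (mod_cast le_top))
    (fun u hu ↦ add_nonneg (mul_nonneg (hφ' u) hu) (hφ0 u))
    ((eventually_gt_atTop R).mono hφR) (hψ' θ) hθim
end

section
/- For every θ ∈ Γ there exist γ ∈ ℝ and k > 0 such that for all f ∈ C_c^∞((0,∞),ℂ): Re(q_θ(f)) + γ·‖f‖²_{L²((0,∞))} ≥ k·|Im(q_θ(f))|, where q_θ(f) := ∫₀^∞ ( a_2(θ,u) f''(u) + a_1(θ,u) f'(u) + a_0(θ,u) f(u) )·conj(f(u)) du is the quadratic form of the dilated Laplacian; that is, the form f ↦ q_θ(f) + γ⟨f,f⟩ is sectorial. -/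
open Set MeasureTheory

/-!
The coefficients satisfy `a₁ = a₂'`, so integrating by parts gives
`q_θ(f) = ∫ ψ_θ'⁻² ‖f'‖² + ∫ a₀ ‖f‖²`. Writing `ψ_θ' = 1 + sθ` with `s = (uφ)' ≥ 0` bounded, the
values of `ψ_θ'` lie in the translated quarter-plane `|Im z| ≤ Re z - 1`, on whose bounded parts
`z⁻²` stays in a fixed sector around the positive axis. Since `a₀` is bounded, `a₀ + γ` lies in the
same sector for large `γ`, and sectors are convex cones, stable under integration.
-/

section Sector

/-- The closed sector `k |Im z| ≤ Re z` with vertex `0` around the positive real axis, whose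
half-angle `α` satisfies `k = cot α`. It is a convex cone when `0 ≤ k`. -/
def sector (k : ℝ) : Set ℂ := {z | k * |z.im| ≤ z.re}

variable {k : ℝ} {z w : ℂ}

lemma add_mem_sector (hk : 0 ≤ k) (hz : z ∈ sector k) (hw : w ∈ sector k) :
    z + w ∈ sector k := by
  simp only [sector, mem_ofPred_eq, Complex.add_im, Complex.add_re] at *
  calc k * |z.im + w.im| ≤ k * (|z.im| + |w.im|) := by gcongr; exact abs_add_le _ _
    _ ≤ z.re + w.re := by rw [mul_add]; exact add_le_add hz hw

lemma mul_ofReal_mem_sector (hz : z ∈ sector k) {r : ℝ} (hr : 0 ≤ r) : z * r ∈ sector k := by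
  simp only [sector, mem_ofPred_eq, Complex.im_mul_ofReal, Complex.re_mul_ofReal, abs_mul,
    abs_of_nonneg hr, ← mul_assoc] at *
  gcongr

lemma inv_mem_sector (hz : z ∈ sector k) : z⁻¹ ∈ sector k := by
  simp only [sector, mem_ofPred_eq, Complex.inv_im, Complex.inv_re, abs_div, abs_neg,
    abs_of_nonneg (Complex.normSq_nonneg z), ← mul_div_assoc] at *
  exact div_le_div_of_nonneg_right hz (Complex.normSq_nonneg z)

lemma sq_mem_sector (hk : 0 ≤ k) (hz : |z.im| ≤ z.re - 1) (hkz : k * z.re ≤ 1) :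
    z ^ 2 ∈ sector k := by
  have hre : 1 ≤ z.re := by linarith [abs_nonneg z.im]
  have re_sq : 2 * z.re - 1 ≤ (z ^ 2).re := by
    have : z.im ^ 2 ≤ (z.re - 1) ^ 2 := sq_le_sq' (by linarith [(abs_le.1 hz).1]) (abs_le.1 hz).2
    simp only [pow_two, Complex.mul_re] at this ⊢
    linarith
  have im_sq : |(z ^ 2).im| ≤ z.re * (2 * z.re - 1) := by
    have : (z ^ 2).im = 2 * z.re * z.im := by simp only [pow_two, Complex.mul_im]; ring
    rw [this, abs_mul, abs_of_nonneg (by linarith)]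
    nlinarith
  calc k * |(z ^ 2).im| ≤ k * (z.re * (2 * z.re - 1)) := by gcongr
    _ = k * z.re * (2 * z.re - 1) := by ring
    _ ≤ 1 * (2 * z.re - 1) := by gcongr; linarith
    _ ≤ (z ^ 2).re := by rwa [one_mul]

lemma add_ofReal_mem_sector_of_norm_le (hk : 0 ≤ k) {M : ℝ} (hz : ‖z‖ ≤ M) :
    z + ((1 + k) * M : ℝ) ∈ sector k := by
  have him : |z.im| ≤ M := (Complex.abs_im_le_norm z).trans hz
  have hre : -M ≤ z.re := (abs_le.1 ((Complex.abs_re_le_norm z).trans hz)).1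
  simp only [sector, mem_ofPred_eq, Complex.add_im, Complex.add_re, Complex.ofReal_im,
    Complex.ofReal_re, add_zero]
  linarith [mul_le_mul_of_nonneg_left him hk]

lemma integral_mem_sector {α : Type*} [MeasurableSpace α] {μ : Measure α} {g : α → ℂ}
    (hk : 0 ≤ k) (hg : Integrable g μ) (hgk : ∀ᵐ x ∂μ, g x ∈ sector k) :
    ∫ x, g x ∂μ ∈ sector k := by
  have him : (∫ x, g x ∂μ).im = ∫ x, (g x).im ∂μ := (integral_im hg).symm
  have hre : (∫ x, g x ∂μ).re = ∫ x, (g x).re ∂μ := (integral_re hg).symm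
  calc k * |(∫ x, g x ∂μ).im| ≤ k * ∫ x, |(g x).im| ∂μ := by
        rw [him]; gcongr; exact abs_integral_le_integral_abs
    _ = ∫ x, k * |(g x).im| ∂μ := (integral_const_mul _ _).symm
    _ ≤ ∫ x, (g x).re ∂μ := integral_mono_ae (hg.im.abs.const_mul k) hg.re hgk
    _ = (∫ x, g x ∂μ).re := hre.symm

end Sector

section CompactSupport

lemma integrable_mul_of_tsupport_subset {X A : Type*} [TopologicalSpace X] [MeasurableSpace X]
    [OpensMeasurableSpace X] {μ : Measure X} [IsFiniteMeasureOnCompacts μ] [NormedRing A]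
    {U : Set X} {a g : X → A} (hU : IsOpen U) (ha : ContinuousOn a U)
    (hg : Continuous g) (hgc : HasCompactSupport g) (hgU : tsupport g ⊆ U) :
    Integrable (fun x => a x * g x) μ :=
  ((ha.mul hg.continuousOn).continuous_of_tsupport_subset hU
    (tsupport_mul_subset_right.trans hgU)).integrable_of_hasCompactSupport hgc.mul_left

lemma integrable_mul_norm_sq {X E : Type*} [TopologicalSpace X] [MeasurableSpace X]
    [OpensMeasurableSpace X] {μ : Measure X} [IsFiniteMeasureOnCompacts μ]
    [SeminormedAddCommGroup E] {U : Set X} {a : X → ℂ} {g : X → E} (hU : IsOpen U)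
    (ha : ContinuousOn a U) (hg : Continuous g) (hgc : HasCompactSupport g) (hgU : tsupport g ⊆ U) :
    Integrable (fun x => a x * (‖g x‖ ^ 2 : ℝ)) μ := by
  have hsq : ((‖(0 : E)‖ ^ 2 : ℝ) : ℂ) = 0 := by simp
  have hgsqU : tsupport (fun x => ((‖g x‖ ^ 2 : ℝ) : ℂ)) ⊆ U :=
    (tsupport_comp_subset (g := fun z : E => ((‖z‖ ^ 2 : ℝ) : ℂ)) hsq g).trans hgU
  exact integrable_mul_of_tsupport_subset hU ha (by fun_prop)
    (hgc.comp_left (g := fun z : E => ((‖z‖ ^ 2 : ℝ) : ℂ)) hsq) hgsqU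

lemma setIntegral_mul_deriv_eq_neg {A : Type*} [NormedRing A] [NormedAlgebra ℝ A] {U : Set ℝ}
    {F F' g : ℝ → A} (hU : IsOpen U) (hF : ∀ u ∈ U, HasDerivAt F (F' u) u)
    (hF' : ContinuousOn F' U)
    (hg : ContDiff ℝ 1 g) (hgc : HasCompactSupport g) (hgU : tsupport g ⊆ U) :
    ∫ u in U, F u * deriv g u = -∫ u in U, F' u * g u := by
  have hFc : ContinuousOn F U := fun u hu => (hF u hu).continuousAt.continuousWithinAt
  have hg'U : tsupport (deriv g) ⊆ U := tsupport_deriv_subset.trans hgU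
  have zero_compl {a h : ℝ → A} (hh : tsupport h ⊆ U) (u : ℝ) (hu : u ∉ U) : a u * h u = 0 := by
    rw [image_eq_zero_of_notMem_tsupport fun hu' => hu (hh hu'), mul_zero]
  rw [setIntegral_eq_integral_of_forall_compl_eq_zero (zero_compl hg'U),
    setIntegral_eq_integral_of_forall_compl_eq_zero (zero_compl hgU)]
  exact integral_mul_deriv_eq_deriv_mul_of_integrable (fun u hu => hF u (hgU hu))
    (fun u _ => (hg.differentiable one_ne_zero u).hasDerivAt)
    (integrable_mul_of_tsupport_subset hU hFc hg.continuous_deriv_one hgc.deriv hg'U)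
    (integrable_mul_of_tsupport_subset hU hF' hg.continuous hgc hgU)
    (integrable_mul_of_tsupport_subset hU hFc hg.continuous hgc hgU)

end CompactSupport

section Form

/-- The quadratic form `⟨(a ∂² + b ∂ + c) f, f⟩` of a second-order differential operator on
`L²(U)`, meant for `f` twice differentiable and compactly supported in `U`. -/
noncomputable def secondOrderForm (U : Set ℝ) (a b c f : ℝ → ℂ) : ℂ :=
  ∫ u in U, (a u * deriv (deriv f) u + b u * deriv f u + c u * f u) * (starRingEnd ℂ) (f u)

variable {U : Set ℝ} {a a' c f : ℝ → ℂ}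

lemma secondOrderForm_eq_integral_norm_sq (hU : IsOpen U)
    (ha : ∀ u ∈ U, HasDerivAt a (a' u) u) (ha' : ContinuousOn a' U) (hc : ContinuousOn c U)
    (hf : ContDiff ℝ 2 f) (hfc : HasCompactSupport f) (hfU : tsupport f ⊆ U) :
    secondOrderForm U a a' c f
      = (∫ u in U, -a u * (‖deriv f u‖ ^ 2 : ℝ)) + ∫ u in U, c u * (‖f u‖ ^ 2 : ℝ) := by
  have hac : ContinuousOn a U := fun u hu => (ha u hu).continuousAt.continuousWithinAt
  have hf' : ∀ u, HasDerivAt f (deriv f u) u :=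
    fun u => (hf.differentiable two_ne_zero u).hasDerivAt
  have hf'' : ∀ u, HasDerivAt (deriv f) (deriv (deriv f) u) u :=
    fun u => (hf.differentiable_deriv_two u).hasDerivAt
  have hf1 : ContDiff ℝ 1 (deriv f) := hf.deriv'
  have cf'' : Continuous (deriv (deriv f)) := hf1.continuous_deriv_one
  have hflux : ∀ u ∈ U, HasDerivAt (fun u => a u * deriv f u)
      (a' u * deriv f u + a u * deriv (deriv f) u) u := fun u hu => (ha u hu).mul (hf'' u)
  have hflux' : ContinuousOn (fun u => a' u * deriv f u + a u * deriv (deriv f) u) U :=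
    (ha'.mul hf1.continuous.continuousOn).add (hac.mul cf''.continuousOn)
  set g : ℝ → ℂ := fun u => (starRingEnd ℂ) (f u)
  have hg : ContDiff ℝ 1 g := Complex.conjCLE.contDiff.comp (hf.of_le one_le_two)
  have hg' : deriv g = fun u => (starRingEnd ℂ) (deriv f u) :=
    funext fun u => (hf' u).star.deriv
  have hgc : HasCompactSupport g := hfc.comp_left (map_zero (starRingEnd ℂ))
  have hgU : tsupport g ⊆ U :=
    (tsupport_comp_subset (map_zero (starRingEnd ℂ)) f).trans hfU
  have by_parts := setIntegral_mul_deriv_eq_neg hU hflux hflux' hg hgc hgU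
  calc secondOrderForm U a a' c f
      = ∫ u in U, ((a' u * deriv f u + a u * deriv (deriv f) u) * g u + c u * f u * g u) := by
        simp only [secondOrderForm, g]; congr 1; ext u; ring
    _ = (∫ u in U, (a' u * deriv f u + a u * deriv (deriv f) u) * g u)
          + ∫ u in U, c u * f u * g u :=
        integral_add
          (integrable_mul_of_tsupport_subset hU hflux' hg.continuous hgc hgU).integrableOn
          (integrable_mul_of_tsupport_subset hU (hc.mul hf.continuous.continuousOn)
            hg.continuous hgc hgU).integrableOn
    _ = (∫ u in U, -a u * (‖deriv f u‖ ^ 2 : ℝ)) + ∫ u in U, c u * (‖f u‖ ^ 2 : ℝ) := by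
        rw [eq_neg_iff_add_eq_zero, add_comm, ← eq_neg_iff_add_eq_zero] at by_parts
        rw [by_parts, ← integral_neg, hg']
        simp only [g, mul_assoc, Complex.mul_conj, Complex.normSq_eq_norm_sq, neg_mul]

theorem secondOrderForm_add_mem_sector {k M : ℝ} (hU : IsOpen U)
    (ha : ∀ u ∈ U, HasDerivAt a (a' u) u) (ha' : ContinuousOn a' U) (hc : ContinuousOn c U)
    (hk : 0 ≤ k) (hak : ∀ u ∈ U, -a u ∈ sector k) (hcM : ∀ u ∈ U, ‖c u‖ ≤ M)
    (hf : ContDiff ℝ 2 f) (hfc : HasCompactSupport f) (hfU : tsupport f ⊆ U) :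
    secondOrderForm U a a' c f + ((1 + k) * M * ∫ u in U, ‖f u‖ ^ 2 : ℝ) ∈ sector k := by
  have hac : ContinuousOn a U := fun u hu => (ha u hu).continuousAt.continuousWithinAt
  have hia := integrable_mul_norm_sq (μ := volume) hU hac.neg (hf.continuous_deriv one_le_two)
    hfc.deriv (tsupport_deriv_subset.trans hfU)
  have hic := integrable_mul_norm_sq (μ := volume) hU hc hf.continuous hfc hfU
  have hiγ := integrable_mul_norm_sq (μ := volume) hU
    (continuousOn_const (c := (((1 + k) * M : ℝ) : ℂ))) hf.continuous hfc hfU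
  have hshift : (∫ u in U, c u * (‖f u‖ ^ 2 : ℝ)) + ((1 + k) * M * ∫ u in U, ‖f u‖ ^ 2 : ℝ)
      = ∫ u in U, (c u * (‖f u‖ ^ 2 : ℝ) + ((1 + k) * M : ℝ) * (‖f u‖ ^ 2 : ℝ)) := by
    rw [Complex.ofReal_mul, ← integral_complex_ofReal, ← integral_const_mul,
      integral_add hic.integrableOn hiγ.integrableOn]
  rw [secondOrderForm_eq_integral_norm_sq hU ha ha' hc hf hfc hfU, add_assoc, hshift]
  refine add_mem_sector hk (integral_mem_sector hk hia.integrableOn ?_)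
    (integral_mem_sector hk (hic.add hiγ).integrableOn ?_)
  all_goals filter_upwards [ae_restrict_mem hU.measurableSet] with u hu
  · exact mul_ofReal_mem_sector (hak u hu) (sq_nonneg _)
  · rw [← add_mul]
    exact mul_ofReal_mem_sector (add_ofReal_mem_sector_of_norm_le hk (hcM u hu)) (sq_nonneg _)

end Form

section ChangeOfVariables

/-- The quadratic form on `U` of the operator obtained from `-∂²` by conjugation with the weighted
composition `f ↦ P ^ (1 / 2) • f ∘ ψ`, where `ψ` is a (complex) change of variables with derivative
`P`, and `P'`, `P''` are the next two derivatives. -/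
noncomputable def conjLaplacianForm (U : Set ℝ) (P P' P'' : ℝ → ℂ) : (ℝ → ℂ) → ℂ :=
  secondOrderForm U (fun u => -(1 / P u ^ 2)) (fun u => 2 * P' u / P u ^ 3)
    (fun u => (1 / 2) * P'' u / P u ^ 3 - (5 / 4) * P' u ^ 2 / P u ^ 4)

lemma hasDerivAt_neg_one_div_sq {𝕜 𝕜' : Type*} [NontriviallyNormedField 𝕜]
    [NontriviallyNormedField 𝕜'] [NormedAlgebra 𝕜 𝕜'] {P : 𝕜 → 𝕜'} {p' : 𝕜'} {u : 𝕜}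
    (hP : HasDerivAt P p' u) (h0 : P u ≠ 0) :
    HasDerivAt (fun u => -(1 / P u ^ 2)) (2 * p' / P u ^ 3) u := by
  simp only [one_div]
  refine ((hP.fun_pow 2).fun_inv (pow_ne_zero 2 h0)).fun_neg.congr_deriv ?_
  norm_num
  field_simp

lemma norm_conjLaplacian_potential_le {p p' p'' : ℂ} {B C : ℝ} (hp : 1 ≤ ‖p‖) (hB : ‖p'‖ ≤ B)
    (hC : ‖p''‖ ≤ C) :
    ‖(1 / 2) * p'' / p ^ 3 - (5 / 4) * p' ^ 2 / p ^ 4‖ ≤ C / 2 + 5 / 4 * B ^ 2 := by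
  have div_le (z : ℂ) (n : ℕ) : ‖z / p ^ n‖ ≤ ‖z‖ := by
    rw [norm_div, norm_pow]
    exact div_le_self (norm_nonneg z) (one_le_pow₀ hp)
  calc ‖(1 / 2) * p'' / p ^ 3 - (5 / 4) * p' ^ 2 / p ^ 4‖
      ≤ ‖(1 / 2) * p''‖ + ‖(5 / 4) * p' ^ 2‖ :=
        (norm_sub_le _ _).trans (add_le_add (div_le _ 3) (div_le _ 4))
    _ = ‖p''‖ / 2 + 5 / 4 * ‖p'‖ ^ 2 := by norm_num; ring
    _ ≤ C / 2 + 5 / 4 * B ^ 2 := by gcongr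

theorem conjLaplacianForm_add_mem_sector {U : Set ℝ} {P P' P'' f : ℝ → ℂ} {k B C : ℝ}
    (hU : IsOpen U) (hP : ∀ u ∈ U, HasDerivAt P (P' u) u)
    (hP' : ∀ u ∈ U, HasDerivAt P' (P'' u) u) (hP'' : ContinuousOn P'' U)
    (hPim : ∀ u ∈ U, |(P u).im| ≤ (P u).re - 1)
    (hk : 0 ≤ k) (hkP : ∀ u ∈ U, k * (P u).re ≤ 1)
    (hB : ∀ u ∈ U, ‖P' u‖ ≤ B) (hC : ∀ u ∈ U, ‖P'' u‖ ≤ C)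
    (hf : ContDiff ℝ 2 f) (hfc : HasCompactSupport f) (hfU : tsupport f ⊆ U) :
    conjLaplacianForm U P P' P'' f
      + ((1 + k) * (C / 2 + 5 / 4 * B ^ 2) * ∫ u in U, ‖f u‖ ^ 2 : ℝ) ∈ sector k := by
  have hPc : ContinuousOn P U := fun u hu => (hP u hu).continuousAt.continuousWithinAt
  have hP'c : ContinuousOn P' U := fun u hu => (hP' u hu).continuousAt.continuousWithinAt
  have one_le_norm (u) (hu : u ∈ U) : 1 ≤ ‖P u‖ :=
    le_trans (by linarith [abs_nonneg (P u).im, hPim u hu]) (Complex.re_le_norm (P u))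
  have hP0 (u) (hu : u ∈ U) : P u ≠ 0 := norm_pos_iff.1 (one_pos.trans_le (one_le_norm u hu))
  have pow_ne (n : ℕ) : ∀ u ∈ U, P u ^ n ≠ 0 := fun u hu => pow_ne_zero n (hP0 u hu)
  refine secondOrderForm_add_mem_sector hU
    (fun u hu => hasDerivAt_neg_one_div_sq (hP u hu) (hP0 u hu))
    ((continuousOn_const.mul hP'c).div (hPc.pow 3) (pow_ne 3))
    (((continuousOn_const.mul hP'').div (hPc.pow 3) (pow_ne 3)).sub
      ((continuousOn_const.mul (hP'c.pow 2)).div (hPc.pow 4) (pow_ne 4)))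
    hk (fun u hu => ?_)
    (fun u hu => norm_conjLaplacian_potential_le (one_le_norm u hu) (hB u hu) (hC u hu)) hf hfc hfU
  rw [neg_neg, one_div]
  exact inv_mem_sector (sq_mem_sector hk (hPim u hu) (hkP u hu))

theorem exists_conjLaplacianForm_sectorial {U : Set ℝ} {P P' P'' : ℝ → ℂ}
    (hU : IsOpen U) (hP : ∀ u ∈ U, HasDerivAt P (P' u) u)
    (hP' : ∀ u ∈ U, HasDerivAt P' (P'' u) u) (hP'' : ContinuousOn P'' U)
    (hPim : ∀ u ∈ U, |(P u).im| ≤ (P u).re - 1) (hA : ∃ A, ∀ u ∈ U, ‖P u‖ ≤ A)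
    (hB : ∃ B, ∀ u ∈ U, ‖P' u‖ ≤ B) (hC : ∃ C, ∀ u ∈ U, ‖P'' u‖ ≤ C) :
    ∃ γ k : ℝ, 0 < k ∧ ∀ f, ContDiff ℝ 2 f → HasCompactSupport f → tsupport f ⊆ U →
      k * |(conjLaplacianForm U P P' P'' f).im|
        ≤ (conjLaplacianForm U P P' P'' f).re + γ * ∫ u in U, ‖f u‖ ^ 2 := by
  obtain ⟨A, hA⟩ := hA
  obtain ⟨B, hB⟩ := hB
  obtain ⟨C, hC⟩ := hC
  have hA0 : 0 < |A| + 1 := by positivity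
  have hkP (u) (hu : u ∈ U) : (|A| + 1)⁻¹ * (P u).re ≤ 1 := by
    rw [inv_mul_le_one₀ hA0]
    linarith [Complex.re_le_norm (P u), hA u hu, le_abs_self A]
  refine ⟨(1 + (|A| + 1)⁻¹) * (C / 2 + 5 / 4 * B ^ 2), (|A| + 1)⁻¹, inv_pos.2 hA0,
    fun f hf hfc hfU => ?_⟩
  simpa only [sector, mem_ofPred_eq, Complex.add_im, Complex.add_re, Complex.ofReal_im,
    Complex.ofReal_re, add_zero] using conjLaplacianForm_add_mem_sector hU hP hP' hP'' hPim
      (inv_pos.2 hA0).le hkP hB hC hf hfc hfU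

end ChangeOfVariables

section Dilation

lemma deriv_eq_zero_of_Ioi_const {E : Type*} [NormedAddCommGroup E] [NormedSpace ℝ E] {g : ℝ → E}
    {R : ℝ} {c : E} (hg : ∀ u, R < u → g u = c) (u : ℝ) (hu : R < u) : deriv g u = 0 := by
  rw [EqOn.deriv (g := fun _ => c) (fun v hv => hg v hv) isOpen_Ioi hu, deriv_const]

lemma exists_norm_le_of_Ioi_const {E : Type*} [SeminormedAddCommGroup E] {g : ℝ → E}
    (hg : Continuous g) (a : ℝ) {R : ℝ} {c : E} (hgR : ∀ u, R < u → g u = c) :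
    ∃ C, ∀ u ∈ Ioi a, ‖g u‖ ≤ C := by
  obtain ⟨C, hC⟩ := isCompact_Icc.exists_bound_of_continuousOn (s := Icc a R) hg.continuousOn
  refine ⟨max C ‖c‖, fun u hu => ?_⟩
  rcases le_or_gt u R with huR | huR
  · exact (hC u ⟨le_of_lt hu, huR⟩).trans (le_max_left _ _)
  · rw [hgR u huR]
    exact le_max_right _ _

lemma hasDerivAt_deriv_mul_id_add_const_mul {g : ℝ → ℝ} (hg : ContDiff ℝ 2 g) (m θ : ℂ) (u : ℝ) :
    HasDerivAt (fun u : ℝ => ((deriv g u * u : ℝ) : ℂ) * θ + m * (g u : ℂ) * θ)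
      (((deriv (deriv g) u * u : ℝ) : ℂ) * θ + (m + 1) * ((deriv g u : ℝ) : ℂ) * θ) u := by
  have hg₀ : HasDerivAt (fun u => (g u : ℂ)) ((deriv g u : ℝ) : ℂ) u :=
    (hg.differentiable two_ne_zero u).hasDerivAt.ofReal_comp
  have hg₁ : HasDerivAt (fun u : ℝ => ((deriv g u * u : ℝ) : ℂ))
      ((deriv (deriv g) u * u + deriv g u * 1 : ℝ) : ℂ) u :=
    ((hg.differentiable_deriv_two u).hasDerivAt.mul (hasDerivAt_id u)).ofReal_comp
  exact ((hg₁.mul_const θ).add ((hg₀.const_mul m).mul_const θ)).congr_deriv (by push_cast; ring)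

lemma abs_im_ofReal_mul_add_one_le {θ : ℂ} (hθ : |θ.im| ≤ θ.re) {s : ℝ} (hs : 0 ≤ s) :
    |(s * θ + 1).im| ≤ (s * θ + 1).re - 1 := by
  simp only [Complex.add_im, Complex.add_re, Complex.im_ofReal_mul, Complex.re_ofReal_mul,
    Complex.one_im, Complex.one_re, add_zero, add_sub_cancel_right, abs_mul, abs_of_nonneg hs]
  gcongr

end Dilation

theorem stmt_9_general (R : ℝ) (φ : ℝ → ℝ) (hφ : ContDiff ℝ 3 φ) (hφ0 : ∀ u, 0 < u → 0 ≤ φ u)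
    (hφ' : ∀ u, 0 < u → 0 ≤ deriv φ u) (hφR : ∀ u, R < u → φ u = 1)
    (ψ' ψ'' ψ''' : ℂ → ℝ → ℂ)
    (hψ' : ∀ θ u, ψ' θ u = ((deriv φ u * u : ℝ) : ℂ) * θ + ((φ u : ℝ) : ℂ) * θ + 1)
    (hψ'' : ∀ θ u, ψ'' θ u
      = ((deriv (deriv φ) u * u : ℝ) : ℂ) * θ + 2 * ((deriv φ u : ℝ) : ℂ) * θ)
    (hψ''' : ∀ θ u, ψ''' θ u
      = ((deriv (deriv (deriv φ)) u * u : ℝ) : ℂ) * θ + 3 * ((deriv (deriv φ) u : ℝ) : ℂ) * θ)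
    (a₂ a₁ a₀ : ℂ → ℝ → ℂ)
    (ha₂ : ∀ θ u, a₂ θ u = -(1 / (ψ' θ u) ^ 2))
    (ha₁ : ∀ θ u, a₁ θ u = 2 * ψ'' θ u / (ψ' θ u) ^ 3)
    (ha₀ : ∀ θ u, a₀ θ u = (1 / 2) * ψ''' θ u / (ψ' θ u) ^ 3
      - (5 / 4) * (ψ'' θ u) ^ 2 / (ψ' θ u) ^ 4)
    (θ : ℂ) (hθ : |θ.im| ≤ θ.re) :
    ∃ γ : ℝ, ∃ k : ℝ, 0 < k ∧
      ∀ f : ℝ → ℂ, ContDiff ℝ 2 f → HasCompactSupport f → tsupport f ⊆ Ioi 0 →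
        k * |(∫ u in Ioi (0 : ℝ),
                (a₂ θ u * deriv (deriv f) u + a₁ θ u * deriv f u + a₀ θ u * f u)
                  * (starRingEnd ℂ) (f u)).im|
          ≤ (∫ u in Ioi (0 : ℝ),
                (a₂ θ u * deriv (deriv f) u + a₁ θ u * deriv f u + a₀ θ u * f u)
                  * (starRingEnd ℂ) (f u)).re
            + γ * ∫ u in Ioi (0 : ℝ), ‖f u‖ ^ 2 := by
  have hφ₁ : ContDiff ℝ 2 (deriv φ) := hφ.deriv'
  have hφ₂ : ContDiff ℝ 1 (deriv (deriv φ)) := hφ₁.deriv'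
  have hφ₁R := deriv_eq_zero_of_Ioi_const hφR
  have hφ₂R := deriv_eq_zero_of_Ioi_const hφ₁R
  have hφ₃R := deriv_eq_zero_of_Ioi_const hφ₂R
  have hdψ' (u : ℝ) : HasDerivAt (ψ' θ) (ψ'' θ u) u := by
    simpa only [← hψ', ← hψ'', one_mul, one_add_one_eq_two] using
      (hasDerivAt_deriv_mul_id_add_const_mul (hφ.of_le (by norm_num)) 1 θ u).add_const 1
  have hdψ'' (u : ℝ) : HasDerivAt (ψ'' θ) (ψ''' θ u) u := by
    simpa only [← hψ'', ← hψ''', two_add_one_eq_three] using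
      hasDerivAt_deriv_mul_id_add_const_mul hφ₁ 2 θ u
  have hψ'c : Continuous (ψ' θ) := continuous_iff_continuousAt.2 fun u => (hdψ' u).continuousAt
  have hψ''c : Continuous (ψ'' θ) := continuous_iff_continuousAt.2 fun u => (hdψ'' u).continuousAt
  have hψ'''c : Continuous (ψ''' θ) := by rw [funext (hψ''' θ)]; fun_prop
  have hψ'R (u : ℝ) (hu : R < u) : ψ' θ u = θ + 1 := by simp [hψ', hφR u hu, hφ₁R u hu]
  have hψ''R (u : ℝ) (hu : R < u) : ψ'' θ u = 0 := by simp [hψ'', hφ₁R u hu, hφ₂R u hu]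
  have hψ'''R (u : ℝ) (hu : R < u) : ψ''' θ u = 0 := by simp [hψ''', hφ₂R u hu, hφ₃R u hu]
  have hψ'im (u : ℝ) (hu : u ∈ Ioi 0) : |(ψ' θ u).im| ≤ (ψ' θ u).re - 1 := by
    rw [hψ', ← add_mul, ← Complex.ofReal_add]
    exact abs_im_ofReal_mul_add_one_le hθ
      (add_nonneg (mul_nonneg (hφ' u hu) (le_of_lt hu)) (hφ0 u hu))
  rw [funext (ha₂ θ), funext (ha₁ θ), funext (ha₀ θ)]
  exact exists_conjLaplacianForm_sectorial isOpen_Ioi (fun u _ => hdψ' u) (fun u _ => hdψ'' u)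
    hψ'''c.continuousOn hψ'im
    (exists_norm_le_of_Ioi_const hψ'c 0 hψ'R) (exists_norm_le_of_Ioi_const hψ''c 0 hψ''R)
    (exists_norm_le_of_Ioi_const hψ'''c 0 hψ'''R)

/-- For every `θ ∈ Γ` there exist `γ ∈ ℝ` and `k > 0` such that for
all `f ∈ C_c^∞((0,∞),ℂ)`: `Re(q_θ(f)) + γ‖f‖² ≥ k·|Im(q_θ(f))|`, where
`q_θ(f) = ∫₀^∞ (a₂(θ,u)f''(u) + a₁(θ,u)f'(u) + a₀(θ,u)f(u))·conj(f(u)) du`;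
that is, the form `f ↦ q_θ(f) + γ⟨f,f⟩` is sectorial. -/
theorem stmt_9
    (K R : ℝ) (hK : 2 < K) (hKR : K < R)
    (φ : ℝ → ℝ) (hφ : ContDiff ℝ (⊤ : ℕ∞) φ)
    (hφ0 : ∀ u, 0 ≤ φ u) (hφ1 : ∀ u, φ u ≤ 1)
    (hφ' : ∀ u, 0 ≤ deriv φ u)
    (hφK : ∀ u, u < K → φ u = 0)
    (hφR : ∀ u, R < u → φ u = 1)
    (ψ' ψ'' ψ''' : ℂ → ℝ → ℂ)
    (hψ' : ∀ θ u, ψ' θ u = ((deriv φ u * u : ℝ) : ℂ) * θ + ((φ u : ℝ) : ℂ) * θ + 1)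
    (hψ'' : ∀ θ u, ψ'' θ u
      = ((deriv (deriv φ) u * u : ℝ) : ℂ) * θ + 2 * ((deriv φ u : ℝ) : ℂ) * θ)
    (hψ''' : ∀ θ u, ψ''' θ u
      = ((deriv (deriv (deriv φ)) u * u : ℝ) : ℂ) * θ + 3 * ((deriv (deriv φ) u : ℝ) : ℂ) * θ)
    (a₂ a₁ a₀ : ℂ → ℝ → ℂ)
    (ha₂ : ∀ θ u, a₂ θ u = -(1 / (ψ' θ u) ^ 2))
    (ha₁ : ∀ θ u, a₁ θ u = 2 * ψ'' θ u / (ψ' θ u) ^ 3)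
    (ha₀ : ∀ θ u, a₀ θ u = (1 / 2) * ψ''' θ u / (ψ' θ u) ^ 3
      - (5 / 4) * (ψ'' θ u) ^ 2 / (ψ' θ u) ^ 4)
    (θ : ℂ) (hθre : 0 < θ.re) (hθim : |θ.im| ≤ θ.re) (hθim2 : θ.im ^ 2 < 1 / 2) :
    ∃ γ : ℝ, ∃ k : ℝ, 0 < k ∧
      ∀ f : ℝ → ℂ, ContDiff ℝ (⊤ : ℕ∞) f → HasCompactSupport f → tsupport f ⊆ Ioi 0 →
        k * |(∫ u in Ioi (0 : ℝ),
                (a₂ θ u * deriv (deriv f) u + a₁ θ u * deriv f u + a₀ θ u * f u)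
                  * (starRingEnd ℂ) (f u)).im|
          ≤ (∫ u in Ioi (0 : ℝ),
                (a₂ θ u * deriv (deriv f) u + a₁ θ u * deriv f u + a₀ θ u * f u)
                  * (starRingEnd ℂ) (f u)).re
            + γ * ∫ u in Ioi (0 : ℝ), ‖f u‖ ^ 2 := by
  obtain ⟨γ, k, hk, h⟩ := stmt_9_general R φ (mod_cast contDiff_infty.1 hφ 3)
    (fun u _ => hφ0 u) (fun u _ => hφ' u) hφR ψ' ψ'' ψ''' hψ' hψ'' hψ''' a₂ a₁ a₀ ha₂ ha₁ ha₀ θ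
    hθim
  exact ⟨γ, k, hk, fun f hf => h f (mod_cast contDiff_infty.1 hf 2)⟩
end

section
/- Let θ' ∈ ℂ and μ, λ ∈ ℂ. Let (p_n) and (q_n) be sequences in C_c^∞((0,∞),ℂ) such that ‖p_n‖_{L²} = ‖q_n‖_{L²} = 1, for every T > 0 there exists N such that for all n > N the supports of p_n and of q_n are disjoint from (0,T], ‖θ'·p_n''‖_{L²((0,∞))} → 0, and ‖−θ'·q_n'' + (μ−λ)·q_n‖_{L²((0,∞))} → 0. Define g_n(u₁,u₂) := p_n(u₁)·q_n(u₂). Then ‖g_n‖_{L²((0,∞)²)} = 1, for every T > 0 the support of g_n is eventually disjoint from [0,T]×(0,∞), and ‖−θ'·∂²_{u₁}g_n − θ'·∂²_{u₂}g_n + (μ−λ)·g_n‖_{L²((0,∞)²)} → 0. -/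
open Set MeasureTheory Filter

/-!
The product `g = p ⊗ q` separates variables: the corner operator is the Kronecker sum of the two
half-line operators, so it maps `g` to `(A p) ⊗ q + p ⊗ (B q)`. Since `‖f ⊗ h‖ = ‖f‖ ‖h‖`, the
residual of `g` is at most the sum of the residuals of the unit vectors `p` and `q`.
-/

open scoped ENNReal

theorem disjoint_Icc_of_subset_Ioi {α : Type*} [Preorder α] {s : Set α} {a b : α}
    (hs : s ⊆ Ioi a) (h : Disjoint s (Ioc a b)) : Disjoint s (Icc a b) :=
  disjoint_left.2 fun _ hx hxI ↦ disjoint_left.1 h hx ⟨hs hx, hxI.2⟩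

/-- The external (tensor) product `f ⊗ h` of two functions, `(x, y) ↦ f x * h y`, which glues
functions of one variable into a function on the corner. -/
def tensorFun {α β R : Type*} [Mul R] (f : α → R) (h : β → R) : α × β → R :=
  fun x ↦ f x.1 * h x.2

section Tensor

variable {α β : Type*}

theorem disjoint_support_tensorFun_prod {R : Type*} [MulZeroClass R] {f : α → R} {s : Set α}
    (hs : Disjoint (Function.support f) s) (h : β → R) (t : Set β) :
    Disjoint (Function.support (tensorFun f h)) (s ×ˢ t) :=
  disjoint_left.2 fun _ hx hxst ↦ disjoint_left.1 hs (left_ne_zero_of_mul hx) hxst.1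

variable {mα : MeasurableSpace α} {mβ : MeasurableSpace β} {m : Measure α} {k : Measure β}

theorem aestronglyMeasurable_tensorFun {R : Type*} [Mul R] [TopologicalSpace R] [ContinuousMul R]
    {f : α → R} {h : β → R} (hf : AEStronglyMeasurable f m) (hh : AEStronglyMeasurable h k) :
    AEStronglyMeasurable (tensorFun f h) (m.prod k) :=
  hf.comp_fst.mul hh.comp_snd

variable [SFinite k]

theorem essSup_tensorFun (a : α → ℝ≥0∞) (b : β → ℝ≥0∞) :
    essSup (tensorFun a b) (m.prod k) = essSup a m * essSup b k := by
  apply le_antisymm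
  · refine essSup_le_of_ae_le _ ?_
    filter_upwards [Measure.quasiMeasurePreserving_fst.ae (ENNReal.ae_le_essSup (μ := m) a),
      Measure.quasiMeasurePreserving_snd.ae (ENNReal.ae_le_essSup (μ := k) b)] with x ha hb
    exact mul_le_mul' ha hb
  · have slice_le : ∀ᵐ x ∂m, a x * essSup b k ≤ essSup (tensorFun a b) (m.prod k) := by
      filter_upwards [Measure.ae_ae_of_ae_prod
        (ENNReal.ae_le_essSup (μ := m.prod k) (tensorFun a b))] with x hx
      rw [← ENNReal.essSup_const_mul]
      exact essSup_le_of_ae_le _ hx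
    rw [mul_comm, ← ENNReal.essSup_const_mul]
    refine essSup_le_of_ae_le _ ?_
    filter_upwards [slice_le] with x hx
    rwa [mul_comm]

theorem eLpNorm_tensorFun {R : Type*} [NonUnitalNormedRing R] [NormMulClass R] {f : α → R}
    {h : β → R} (hf : AEStronglyMeasurable f m) (hh : AEStronglyMeasurable h k) (r : ℝ≥0∞) :
    eLpNorm (tensorFun f h) r (m.prod k) = eLpNorm f r m * eLpNorm h r k := by
  rcases eq_or_ne r 0 with rfl | hr₀
  · simp
  rcases eq_or_ne r ∞ with rfl | hr
  · simp only [eLpNorm_exponent_top, eLpNormEssSup_eq_essSup_enorm, tensorFun, enorm_mul]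
    exact essSup_tensorFun (‖f ·‖ₑ) (‖h ·‖ₑ)
  simp only [eLpNorm_eq_lintegral_rpow_enorm_toReal hr₀ hr, tensorFun, enorm_mul,
    ENNReal.mul_rpow_of_nonneg _ _ ENNReal.toReal_nonneg]
  rw [lintegral_prod_mul (hf.enorm.pow_const _) (hh.enorm.pow_const _),
    ENNReal.mul_rpow_of_nonneg _ _ (by positivity)]

end Tensor

section Operators

variable {𝕜 : Type*} [RCLike 𝕜]

/-- The half-line Schrödinger operator `-θ d²/du² + c` with constant potential `c`. Being
defined through `deriv`, it is a genuine second-order operator only where `f` is twice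
differentiable. -/
noncomputable def halfLineOp (θ c : 𝕜) (f : ℝ → 𝕜) (u : ℝ) : 𝕜 :=
  -θ * deriv (deriv f) u + c * f u

/-- The corner operator `-θ(∂²/∂u₁² + ∂²/∂u₂²) + c`, the partial derivatives being derivatives of
the one-variable slices of `g`. -/
noncomputable def cornerOp (θ c : 𝕜) (g : ℝ × ℝ → 𝕜) (x : ℝ × ℝ) : 𝕜 :=
  -θ * deriv (deriv fun t ↦ g (t, x.2)) x.1 - θ * deriv (deriv fun t ↦ g (x.1, t)) x.2 + c * g x

theorem cornerOp_tensorFun (θ c d : 𝕜) (f h : ℝ → 𝕜) :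
    cornerOp θ (c + d) (tensorFun f h) =
      tensorFun (halfLineOp θ c f) h + tensorFun f (halfLineOp θ d h) := by
  ext x
  simp only [cornerOp, halfLineOp, tensorFun, Pi.add_apply, deriv_mul_const_field',
    deriv_const_mul_field']
  ring

theorem eLpNorm_halfLineOp_zero (θ : 𝕜) (f : ℝ → 𝕜) (r : ℝ≥0∞) (m : Measure ℝ) :
    eLpNorm (halfLineOp θ 0 f) r m = eLpNorm (fun u ↦ θ * deriv (deriv f) u) r m :=
  eLpNorm_congr_norm_ae <| .of_forall fun u ↦ by simp [halfLineOp]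

variable {m k : Measure ℝ} {f h : ℝ → 𝕜}

theorem aestronglyMeasurable_halfLineOp (θ c : 𝕜) (hf : AEStronglyMeasurable f m) :
    AEStronglyMeasurable (halfLineOp θ c f) m :=
  ((aestronglyMeasurable_deriv _ m).const_mul _).add (hf.const_mul _)

theorem eLpNorm_cornerOp_tensorFun_le [SFinite k] (θ c d : 𝕜) (hf : AEStronglyMeasurable f m)
    (hh : AEStronglyMeasurable h k) {r : ℝ≥0∞} (hr : 1 ≤ r) :
    eLpNorm (cornerOp θ (c + d) (tensorFun f h)) r (m.prod k) ≤
      eLpNorm (halfLineOp θ c f) r m * eLpNorm h r k +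
        eLpNorm f r m * eLpNorm (halfLineOp θ d h) r k := by
  have hAf := aestronglyMeasurable_halfLineOp θ c hf
  have hBh := aestronglyMeasurable_halfLineOp θ d hh
  rw [cornerOp_tensorFun, ← eLpNorm_tensorFun hAf hh, ← eLpNorm_tensorFun hf hBh]
  exact eLpNorm_add_le (aestronglyMeasurable_tensorFun hAf hh)
    (aestronglyMeasurable_tensorFun hf hBh) hr

theorem tendsto_eLpNorm_cornerOp_tensorFun [SFinite k] {ι : Type*} {l : Filter ι} (θ c d : 𝕜)
    {p q : ι → ℝ → 𝕜} {r : ℝ≥0∞} (hr : 1 ≤ r)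
    (hp : ∀ n, AEStronglyMeasurable (p n) m) (hq : ∀ n, AEStronglyMeasurable (q n) k)
    (hpnorm : ∀ n, eLpNorm (p n) r m = 1) (hqnorm : ∀ n, eLpNorm (q n) r k = 1)
    (hAp : Tendsto (fun n ↦ eLpNorm (halfLineOp θ c (p n)) r m) l (nhds 0))
    (hBq : Tendsto (fun n ↦ eLpNorm (halfLineOp θ d (q n)) r k) l (nhds 0)) :
    Tendsto (fun n ↦ eLpNorm (cornerOp θ (c + d) (tensorFun (p n) (q n))) r (m.prod k)) l
      (nhds 0) := by
  refine tendsto_of_tendsto_of_tendsto_of_le_of_le tendsto_const_nhds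
    (by simpa only [add_zero] using hAp.add hBq) (fun _ ↦ zero_le) fun n ↦ ?_
  simpa only [hpnorm, hqnorm, one_mul, mul_one] using
    eLpNorm_cornerOp_tensorFun_le θ c d (hp n) (hq n) hr

theorem stmt_10_general (θ c d : 𝕜) {r : ℝ≥0∞} (hr : 1 ≤ r) (p q : ℕ → ℝ → 𝕜)
    (hp : ∀ n, ContDiff ℝ 2 (p n)) (hq : ∀ n, ContDiff ℝ 2 (q n))
    (hpsupp : ∀ n, Function.support (p n) ⊆ Ioi 0)
    (hpnorm : ∀ n, eLpNorm (p n) r (volume.restrict (Ioi 0)) = 1)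
    (hqnorm : ∀ n, eLpNorm (q n) r (volume.restrict (Ioi 0)) = 1)
    (hpescape : ∀ T : ℝ, 0 < T → ∃ N : ℕ, ∀ n > N, Disjoint (Function.support (p n)) (Ioc 0 T))
    (hAp : Tendsto (fun n ↦ eLpNorm (halfLineOp θ c (p n)) r (volume.restrict (Ioi 0))) atTop
      (nhds 0))
    (hBq : Tendsto (fun n ↦ eLpNorm (halfLineOp θ d (q n)) r (volume.restrict (Ioi 0))) atTop
      (nhds 0)) :
    (∀ n, eLpNorm (tensorFun (p n) (q n)) r (volume.restrict (Ioi 0 ×ˢ Ioi 0)) = 1) ∧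
    (∀ T : ℝ, 0 < T → ∃ N : ℕ, ∀ n > N,
      Disjoint (Function.support (tensorFun (p n) (q n))) (Icc 0 T ×ˢ Ioi 0)) ∧
    Tendsto (fun n ↦ eLpNorm (cornerOp θ (c + d) (tensorFun (p n) (q n))) r
      (volume.restrict (Ioi 0 ×ˢ Ioi 0))) atTop (nhds 0) := by
  have hpm n := (hp n).continuous.aestronglyMeasurable (μ := volume.restrict (Ioi 0))
  have hqm n := (hq n).continuous.aestronglyMeasurable (μ := volume.restrict (Ioi 0))
  rw [Measure.volume_eq_prod, ← Measure.prod_restrict]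
  refine ⟨fun n ↦ ?normalized, fun T hT ↦ ?escape, ?residual⟩
  case normalized => rw [eLpNorm_tensorFun (hpm n) (hqm n), hpnorm, hqnorm, one_mul]
  case escape =>
    obtain ⟨N, hN⟩ := hpescape T hT
    exact ⟨N, fun n hn ↦
      disjoint_support_tensorFun_prod (disjoint_Icc_of_subset_Ioi (hpsupp n) (hN n hn)) _ _⟩
  case residual =>
    exact tendsto_eLpNorm_cornerOp_tensorFun θ c d hr hpm hqm hpnorm hqnorm hAp hBq

end Operators

/-- Gluing boundary Weyl sequences: if `(p_n)`, `(q_n)` are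
normalized sequences in `C_c^∞((0,∞),ℂ)` whose supports escape to infinity, with
`‖θ'·p_n''‖ → 0` and `‖−θ'·q_n'' + (μ−λ)q_n‖ → 0` in `L²((0,∞))`, then
`g_n(u₁,u₂) := p_n(u₁)q_n(u₂)` is normalized in `L²((0,∞)²)`, its support is
eventually disjoint from `[0,T]×(0,∞)` for every `T > 0`, and
`‖−θ'∂²_{u₁}g_n − θ'∂²_{u₂}g_n + (μ−λ)g_n‖_{L²((0,∞)²)} → 0`. -/
theorem stmt_10
    (θ' μ lam : ℂ)
    (p q : ℕ → ℝ → ℂ)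
    (hp : ∀ n, ContDiff ℝ (⊤ : ℕ∞) (p n) ∧ HasCompactSupport (p n) ∧ tsupport (p n) ⊆ Ioi 0)
    (hq : ∀ n, ContDiff ℝ (⊤ : ℕ∞) (q n) ∧ HasCompactSupport (q n) ∧ tsupport (q n) ⊆ Ioi 0)
    (hpnorm : ∀ n, eLpNorm (p n) 2 ((volume : Measure ℝ).restrict (Ioi 0)) = 1)
    (hqnorm : ∀ n, eLpNorm (q n) 2 ((volume : Measure ℝ).restrict (Ioi 0)) = 1)
    (hsupp : ∀ T : ℝ, 0 < T → ∃ N : ℕ, ∀ n > N,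
      Disjoint (Function.support (p n)) (Ioc 0 T) ∧
      Disjoint (Function.support (q n)) (Ioc 0 T))
    (hp'' : Tendsto
      (fun n => eLpNorm (fun u => θ' * deriv (deriv (p n)) u) 2
        ((volume : Measure ℝ).restrict (Ioi 0))) atTop (nhds 0))
    (hq'' : Tendsto
      (fun n => eLpNorm (fun u => -θ' * deriv (deriv (q n)) u + (μ - lam) * q n u) 2
        ((volume : Measure ℝ).restrict (Ioi 0))) atTop (nhds 0))
    (g : ℕ → ℝ × ℝ → ℂ)
    (hg : ∀ n x, g n x = p n x.1 * q n x.2) :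
    (∀ n, eLpNorm (g n) 2
        ((volume : Measure (ℝ × ℝ)).restrict (Ioi 0 ×ˢ Ioi 0)) = 1) ∧
    (∀ T : ℝ, 0 < T → ∃ N : ℕ, ∀ n > N,
      Disjoint (Function.support (g n)) (Icc 0 T ×ˢ Ioi 0)) ∧
    Tendsto (fun n => eLpNorm
        (fun x : ℝ × ℝ =>
          -θ' * deriv (deriv (fun t => g n (t, x.2))) x.1
          - θ' * deriv (deriv (fun t => g n (x.1, t))) x.2
          + (μ - lam) * g n x) 2
        ((volume : Measure (ℝ × ℝ)).restrict (Ioi 0 ×ˢ Ioi 0))) atTop (nhds 0) := by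
  obtain rfl : g = fun n ↦ tensorFun (p n) (q n) := funext₂ hg
  have glued := stmt_10_general θ' 0 (μ - lam) one_le_two p q
    (fun n ↦ (hp n).1.of_le (by norm_cast))
    (fun n ↦ (hq n).1.of_le (by norm_cast))
    (fun n ↦ (subset_tsupport _).trans (hp n).2.2) hpnorm hqnorm
    (fun T hT ↦ (hsupp T hT).imp fun _ hN n hn ↦ (hN n hn).1)
    (by simpa only [eLpNorm_halfLineOp_zero] using hp'') hq''
  rwa [zero_add] at glued
end

section
/- The linear span of the family of functions u ↦ u^{−k}, for integers k ≥ 2, is dense in L²((1,∞),ℂ) with respect to Lebesgue measure. -/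
open Set MeasureTheory

/-!
If `f ∈ L²(a, ∞)` is orthogonal to every `u ^ (-k)` with `k > m`, then `G u = u ^ (-(m + 1)) * f u`
is integrable and has vanishing moments `∫ (u⁻¹) ^ n * G u`. The variable `u⁻¹` stays in the compact
interval `[0, a⁻¹]`, so by Weierstrass approximation `G` integrates to zero against every continuous
function of `u⁻¹`, and hence vanishes almost everywhere because `u ↦ u⁻¹` is a measurable embedding.
The weight is `u ^ (-(m + 1))` rather than `u ^ (-m)` so that it is square integrable even when
`m = 0`.
-/

section Moments

open Filter Topology

variable {α E : Type*} [MeasurableSpace α] [NormedAddCommGroup E] [NormedSpace ℝ E]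

lemma memLp_top_continuous_comp_of_ae_mem_isCompact {X F : Type*} [TopologicalSpace X]
    [NormedAddCommGroup F] {μ : Measure α} {K : Set X} (hK : IsCompact K) {φ : α → X}
    (hφ : AEStronglyMeasurable φ μ) (hφK : ∀ᵐ x ∂μ, φ x ∈ K) {ψ : X → F} (hψ : Continuous ψ) :
    MemLp (fun x => ψ (φ x)) ⊤ μ := by
  obtain ⟨C, hC⟩ := hK.exists_bound_of_continuousOn hψ.continuousOn
  exact memLp_top_of_bound (hψ.comp_aestronglyMeasurable hφ) C (hφK.mono fun x hx => hC _ hx)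

variable {μ : Measure ℝ} {a b : ℝ} {G : ℝ → E}

lemma integrable_continuous_smul_of_ae_mem_Icc (hμ : ∀ᵐ t ∂μ, t ∈ Icc a b) (hG : Integrable G μ)
    {ψ : ℝ → ℝ} (hψ : Continuous ψ) : Integrable (fun t => ψ t • G t) μ :=
  hG.smul_of_top_right
    (memLp_top_continuous_comp_of_ae_mem_isCompact isCompact_Icc aestronglyMeasurable_id hμ hψ)

lemma integral_polynomial_smul_eq_zero_of_moments_eq_zero (hμ : ∀ᵐ t ∂μ, t ∈ Icc a b)
    (hG : Integrable G μ) (hmom : ∀ n : ℕ, ∫ t, t ^ n • G t ∂μ = 0) (p : Polynomial ℝ) :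
    ∫ t, p.eval t • G t ∂μ = 0 := by
  induction p using Polynomial.induction_on' with
  | add p q hp hq =>
    simp only [Polynomial.eval_add, add_smul]
    rw [integral_add (integrable_continuous_smul_of_ae_mem_Icc hμ hG p.continuous)
      (integrable_continuous_smul_of_ae_mem_Icc hμ hG q.continuous), hp, hq, add_zero]
  | monomial n c =>
    simp only [Polynomial.eval_monomial, mul_smul]
    rw [integral_smul, hmom n, smul_zero]

lemma integral_continuous_smul_eq_zero_of_moments_eq_zero (hμ : ∀ᵐ t ∂μ, t ∈ Icc a b)
    (hG : Integrable G μ) (hmom : ∀ n : ℕ, ∫ t, t ^ n • G t ∂μ = 0)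
    {ψ : ℝ → ℝ} (hψ : Continuous ψ) : ∫ t, ψ t • G t ∂μ = 0 := by
  have approx : ∀ ε > 0, ‖∫ t, ψ t • G t ∂μ‖ ≤ ε * ∫ t, ‖G t‖ ∂μ := by
    intro ε hε
    obtain ⟨p, hp⟩ := exists_polynomial_near_of_continuousOn a b ψ hψ.continuousOn ε hε
    calc ‖∫ t, ψ t • G t ∂μ‖ = ‖∫ t, (p.eval t • G t - ψ t • G t) ∂μ‖ := by
          rw [integral_sub (integrable_continuous_smul_of_ae_mem_Icc hμ hG p.continuous)
            (integrable_continuous_smul_of_ae_mem_Icc hμ hG hψ),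
            integral_polynomial_smul_eq_zero_of_moments_eq_zero hμ hG hmom, zero_sub, norm_neg]
      _ ≤ ∫ t, ε * ‖G t‖ ∂μ := by
          refine norm_integral_le_of_norm_le (hG.norm.const_mul ε) ?_
          filter_upwards [hμ] with t ht
          rw [← sub_smul, norm_smul, Real.norm_eq_abs]
          gcongr
          exact (hp t ht).le
      _ = ε * ∫ t, ‖G t‖ ∂μ := integral_const_mul _ _
  have lim : Tendsto (fun ε : ℝ => ε * ∫ t, ‖G t‖ ∂μ) (𝓝[>] 0) (𝓝 0) :=
    ((continuous_mul_const _).tendsto' 0 0 (zero_mul _)).mono_left nhdsWithin_le_nhds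
  exact norm_le_zero_iff.1 <| ge_of_tendsto lim (eventually_mem_nhdsWithin.mono approx)

lemma ae_eq_zero_of_moments_eq_zero [CompleteSpace E]
    (hμ : ∀ᵐ t ∂μ, t ∈ Icc a b) (hG : Integrable G μ)
    (hmom : ∀ n : ℕ, ∫ t, t ^ n • G t ∂μ = 0) : ∀ᵐ t ∂μ, G t = 0 :=
  ae_eq_zero_of_integral_contDiff_smul_eq_zero hG.locallyIntegrable fun _ψ hψ _ =>
    integral_continuous_smul_eq_zero_of_moments_eq_zero hμ hG hmom hψ.continuous

lemma ae_eq_zero_of_embedding_moments_eq_zero [CompleteSpace E]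
    {μ : Measure α} {φ : α → ℝ} (hφ : MeasurableEmbedding φ) (hφab : ∀ᵐ x ∂μ, φ x ∈ Icc a b)
    {G : α → E} (hG : Integrable G μ) (hmom : ∀ n : ℕ, ∫ x, φ x ^ n • G x ∂μ = 0) :
    ∀ᵐ x ∂μ, G x = 0 := by
  have extend_apply (x : α) : φ.extend G 0 (φ x) = G x := hφ.injective.extend_apply G 0 x
  have extend_zero : ∀ᵐ t ∂μ.map φ, φ.extend G 0 t = 0 := by
    refine ae_eq_zero_of_moments_eq_zero (a := a) (b := b)
      (hφ.ae_map_iff.2 hφab) (hφ.integrable_map_iff.2 ?_) fun n => ?_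
    · exact hG.congr (.of_forall fun x => (extend_apply x).symm)
    · simpa only [hφ.integral_map, extend_apply] using hmom n
  simpa only [hφ.ae_map_iff, extend_apply] using extend_zero

end Moments

section Density

variable {α 𝕜 : Type*} [MeasurableSpace α] [RCLike 𝕜]

theorem topologicalClosure_span_pow_mul_eq_top {μ : Measure α} {a b : ℝ}
    {φ : α → ℝ} (hφ : MeasurableEmbedding φ) (hφab : ∀ᵐ x ∂μ, φ x ∈ Icc a b)
    {w : α → 𝕜} (hw : MemLp w 2 μ) (hw₀ : ∀ᵐ x ∂μ, w x ≠ 0) :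
    (Submodule.span 𝕜 {g : Lp 𝕜 2 μ |
      ∃ n : ℕ, g =ᵐ[μ] fun x => (φ x : 𝕜) ^ n * w x}).topologicalClosure = ⊤ := by
  rw [Submodule.topologicalClosure_eq_top_iff, Submodule.eq_bot_iff]
  intro f hf
  have hmem (n : ℕ) : MemLp (fun x => (φ x : 𝕜) ^ n * w x) 2 μ :=
    hw.mul (memLp_top_continuous_comp_of_ae_mem_isCompact (ψ := fun t : ℝ => (t : 𝕜) ^ n)
      isCompact_Icc hφ.measurable.aestronglyMeasurable hφab (RCLike.continuous_ofReal.pow n))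
  have hmom (n : ℕ) : ∫ x, φ x ^ n • (star (w x) * f x) ∂μ = 0 := by
    have horth := Submodule.mem_orthogonal _ _ |>.1 hf ((hmem n).toLp _)
      (Submodule.subset_span ⟨n, (hmem n).coeFn_toLp⟩)
    rw [← horth, L2.inner_def]
    refine integral_congr_ae ?_
    filter_upwards [(hmem n).coeFn_toLp] with x hx
    rw [hx, RCLike.inner_apply, map_mul, map_pow, RCLike.conj_ofReal, RCLike.real_smul_eq_coe_mul,
      RCLike.ofReal_pow, RCLike.star_def]
    ring
  have hzero := ae_eq_zero_of_embedding_moments_eq_zero hφ hφab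
    (hw.star.integrable_mul (Lp.memLp f)) hmom
  rw [Lp.eq_zero_iff_ae_eq_zero]
  filter_upwards [hzero, hw₀] with x hx hwx
  exact (mul_eq_zero.1 hx).resolve_left (star_ne_zero.2 hwx)

lemma memLp_inv_pow_Ioi {a : ℝ} (ha : 0 < a) {k : ℕ} {p : ENNReal} (hkp : 1 < k * p.toReal) :
    MemLp (fun u : ℝ => (u : 𝕜)⁻¹ ^ k) p (volume.restrict (Ioi a)) := by
  have hp : 0 < p.toReal := pos_of_mul_pos_right (one_pos.trans hkp) k.cast_nonneg
  have hmeas : Measurable (fun u : ℝ => (u : 𝕜)⁻¹ ^ k) := by fun_prop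
  rw [← integrable_norm_rpow_iff hmeas.aestronglyMeasurable (ENNReal.toReal_pos_iff.1 hp).1.ne'
    (ENNReal.toReal_pos_iff.1 hp).2.ne]
  refine (integrableOn_Ioi_rpow_of_lt (neg_lt_neg hkp) ha).congr_fun (fun u hu => ?_)
    measurableSet_Ioi
  have hu₀ : 0 ≤ u := (ha.trans hu).le
  simp only [norm_pow, norm_inv, RCLike.norm_ofReal, abs_of_nonneg hu₀]
  rw [Real.rpow_neg hu₀, Real.rpow_mul hu₀, Real.rpow_natCast, inv_pow,
    Real.inv_rpow (pow_nonneg hu₀ k)]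

theorem stmt_13_general {a : ℝ} (ha : 0 < a) (m : ℕ) :
    (Submodule.span 𝕜
      {g : Lp 𝕜 2 ((volume : Measure ℝ).restrict (Ioi a)) |
        ∃ k : ℕ, m ≤ k ∧
          g =ᵐ[(volume : Measure ℝ).restrict (Ioi a)]
            fun u : ℝ => (u : 𝕜)⁻¹ ^ k}).topologicalClosure = ⊤ := by
  have hmem : ∀ᵐ u ∂(volume : Measure ℝ).restrict (Ioi a), u ∈ Ioi a :=
    ae_restrict_mem measurableSet_Ioi
  have hinv : ∀ᵐ u ∂(volume : Measure ℝ).restrict (Ioi a), u⁻¹ ∈ Icc 0 a⁻¹ :=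
    hmem.mono fun u hu => ⟨inv_nonneg.2 (ha.trans hu).le, inv_anti₀ ha (le_of_lt hu)⟩
  have hexp : 1 < ((m + 1 : ℕ) : ℝ) * (2 : ENNReal).toReal := by
    rw [ENNReal.toReal_ofNat]
    push_cast
    linarith [m.cast_nonneg (α := ℝ)]
  have hweight : MemLp (fun u : ℝ => (u : 𝕜)⁻¹ ^ (m + 1)) 2 (volume.restrict (Ioi a)) :=
    memLp_inv_pow_Ioi ha hexp
  have hweight₀ : ∀ᵐ u : ℝ ∂(volume : Measure ℝ).restrict (Ioi a),
      (u : 𝕜)⁻¹ ^ (m + 1) ≠ 0 :=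
    hmem.mono fun u hu => pow_ne_zero _ (inv_ne_zero (RCLike.ofReal_ne_zero.2 (ha.trans hu).ne'))
  refine top_le_iff.1 <| (topologicalClosure_span_pow_mul_eq_top
    (MeasurableEquiv.inv ℝ).measurableEmbedding hinv hweight hweight₀).ge.trans <|
    Submodule.topologicalClosure_mono <| Submodule.span_mono ?_
  rintro g ⟨n, hg⟩
  exact ⟨n + (m + 1), by omega, by simpa [pow_add] using hg⟩

end Density

/-- The linear span of the functions `u ↦ u^{−k}`, for integers
`k ≥ 2`, is dense in `L²((1,∞),ℂ)` with respect to Lebesgue measure. -/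
theorem stmt_13 :
    (Submodule.span ℂ
      {g : Lp ℂ 2 ((volume : Measure ℝ).restrict (Ioi 1)) |
        ∃ k : ℕ, 2 ≤ k ∧
          (g : ℝ → ℂ) =ᵐ[(volume : Measure ℝ).restrict (Ioi 1)]
            fun u : ℝ => ((u : ℂ))⁻¹ ^ k}).topologicalClosure = ⊤ :=
  stmt_13_general one_pos 2
end
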